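/- L equals the set of all commutator elements of C, i.e. L = {m ∈ C : (0, m) ∈ ε(P′)}, where P′ is the two-sided ideal of P generated by all commutators [a,b] with a, b ∈ P. -/

import Mathlib

open MvPolynomial

namespace Stmt9

/-- Index type for `{1, …, 2d}`: `(i, 0)` stands for `2i-1` and `(i, 1)` for `2i`. -/
abbrev ι (d : ℕ) : Type := Fin d × Fin 2

/-- The free unital associative algebra `P = K⟨x_1, …, x_{2d}⟩`. -/
abbrev P (K : Type) [Field K] (d : ℕ) : Type := FreeAlgebra K (ι d)

/-- The polynomial ring `R = K[y_1, …, y_{2d}]`. -/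
abbrev R (K : Type) [Field K] (d : ℕ) : Type := MvPolynomial (ι d) K

/-- The polynomial ring `S = K[u_1, …, u_{2d}, v'_1, …, v'_{2d}]`; the variable
`X (Sum.inl j)` is `u_j` and `X (Sum.inr j)` is `v'_j`. -/
abbrev S (K : Type) [Field K] (d : ℕ) : Type := MvPolynomial (ι d ⊕ ι d) K

/-- The free `S`-module `M` with basis `a_1, …, a_{2d}`. -/
abbrev M (K : Type) [Field K] (d : ℕ) : Type := ι d → S K d

variable (K : Type) [Field K] (d : ℕ)

/-- The basis element `a_j` of `M`. -/
noncomputable def a (j : ι d) : M K d := Pi.single j 1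

/-- `y_j ↦ u_j`. -/
noncomputable def lam : R K d →ₐ[K] S K d :=
  MvPolynomial.rename (Sum.inl : ι d → ι d ⊕ ι d)

/-- `y_j ↦ v'_j`. -/
noncomputable def rho : R K d →ₐ[K] S K d :=
  MvPolynomial.rename (Sum.inr : ι d → ι d ⊕ ι d)

/-- The left `R`-action on `M`: `y_j` acts as scalar multiplication by `u_j`. -/
noncomputable instance : Module (R K d) (M K d) :=
  Module.compHom _ (lam K d).toRingHom

/-- The right `R`-action on `M`: `y_j` acts as scalar multiplication by `v'_j`. -/
noncomputable instance : Module (R K d)ᵐᵒᵖ (M K d) :=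
  Module.compHom _ (RingHom.fromOpposite (rho K d).toRingHom fun _ _ => mul_comm _ _)

instance : SMulCommClass (R K d) (R K d)ᵐᵒᵖ (M K d) := by
  constructor
  intro r r' m
  show lam K d r • (rho K d r'.unop • m) = rho K d r'.unop • (lam K d r • m)
  rw [smul_smul, smul_smul, mul_comm]

instance : IsScalarTower K (R K d) (M K d) := by
  constructor
  intro c r m
  show lam K d (c • r) • m = c • (lam K d r • m)
  rw [map_smul]
  exact smul_assoc c (lam K d r) m

instance : IsScalarTower K (R K d)ᵐᵒᵖ (M K d) := by
  constructor
  intro c r m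
  show rho K d (c • r).unop • m = c • (rho K d r.unop • m)
  rw [MulOpposite.unop_smul, map_smul]
  exact smul_assoc c (rho K d r.unop) m

/-- The wreath product `W = R ⋉ M`, the trivial square-zero extension of `R` by the
`R`-bimodule `M`. -/
noncomputable abbrev W : Type := TrivSqZeroExt (R K d) (M K d)

/-- The unique `K`-algebra homomorphism `ε : P → W` with `ε(x_j) = (y_j, a_j)`. -/
noncomputable def ε : P K d →ₐ[K] W K d :=
  FreeAlgebra.lift K fun j =>
    TrivSqZeroExt.inl (MvPolynomial.X j) + TrivSqZeroExt.inr (a K d j)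

/-- The commutator ideal `P'` of `P`: the two-sided ideal generated by all commutators
`[a,b] = ab - ba`. -/
noncomputable def P' : TwoSidedIdeal (P K d) :=
  TwoSidedIdeal.span {p : P K d | ∃ a b : P K d, p = a * b - b * a}

/-- `u_j ∈ S`. -/
noncomputable def u (j : ι d) : S K d := X (Sum.inl j)

/-- `v_j = v'_j - u_j ∈ S`. -/
noncomputable def v (j : ι d) : S K d := X (Sum.inr j) - X (Sum.inl j)

/-- `β_{pq} = v_{2p-1} v_{2q} - v_{2p} v_{2q-1}`. -/
noncomputable def β (p q : Fin d) : S K d :=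
  v K d (p, 0) * v K d (q, 1) - v K d (p, 1) * v K d (q, 0)

/-- `γ_{pq} = u_{2p-1} v_{2q} - u_{2p} v_{2q-1}`. -/
noncomputable def γ (p q : Fin d) : S K d :=
  u K d (p, 0) * v K d (q, 1) - u K d (p, 1) * v K d (q, 0)

/-- `w_{pq} = v_{2q}·a_{2p-1} - v_{2q-1}·a_{2p} ∈ M`. -/
noncomputable def w (p q : Fin d) : M K d :=
  v K d (q, 1) • a K d (p, 0) - v K d (q, 0) • a K d (p, 1)

/-- The algebra of constants `S^δ = ker δ_S`, as a `K`-subalgebra of `S`. -/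
noncomputable def Sδ (δS : Derivation K (S K d) (S K d)) : Subalgebra K (S K d) where
  carrier := {f | δS f = 0}
  mul_mem' := by
    intro p q hp hq
    simp only [Set.mem_setOf_eq] at hp hq ⊢
    rw [Derivation.leibniz, hp, hq, smul_zero, smul_zero, add_zero]
  add_mem' := by
    intro p q hp hq
    simp only [Set.mem_setOf_eq] at hp hq ⊢
    rw [map_add, hp, hq, add_zero]
  algebraMap_mem' := by
    intro c
    simp only [Set.mem_setOf_eq, Derivation.map_algebraMap]

/-- The generators `a_1, a_3, …, a_{2d-1}` and `w_{pq}` of the `S^δ`-submodule `C`. -/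
def genC : Set (M K d) :=
  (Set.range fun i : Fin d => a K d (i, 0)) ∪
    {m : M K d | ∃ p q : Fin d, m = w K d p q}

/-- The generators (9)–(16) of the `S^δ`-submodule `L`. -/
def genL : Set (M K d) :=
  {m | ∃ i : Fin d, m = w K d i i} ∪
    {m | ∃ i j : Fin d, i < j ∧ m = w K d i j + w K d j i} ∪
    {m | ∃ i j : Fin d, i < j ∧
      m = v K d (j, 0) • a K d (i, 0) - v K d (i, 0) • a K d (j, 0)} ∪
    {m | ∃ i p q : Fin d, p < q ∧
      m = β K d p q • a K d (i, 0) - v K d (i, 0) • w K d p q} ∪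
    {m | ∃ i j p q : Fin d, i < j ∧ p < q ∧
      m = β K d p q • w K d i j - β K d i j • w K d p q} ∪
    {m | ∃ i j k : Fin d, i < j ∧ j < k ∧
      m = β K d j k • a K d (i, 0) - β K d i k • a K d (j, 0)
        + β K d i j • a K d (k, 0)} ∪
    {m | ∃ i j k l : Fin d, j < k ∧ k < l ∧
      m = γ K d i j • w K d k l - γ K d i k • w K d j l + γ K d i l • w K d j k} ∪
    {m | ∃ i j k : Fin d, j < k ∧
      m = u K d (i, 0) • w K d j k - γ K d i k • a K d (j, 0)
        + γ K d i j • a K d (k, 0)}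

/-!
Let `φ : M → S` be the `S`-linear map with `a_j ↦ v_j`. A Fox-type identity expresses `φ` of the
`M`-component of `ε(p)` through its `R`-component, so commutator elements lie in `ker φ`; the
generators of `L` are combinations of the commutator elements `v_j a_i - v_i a_j`. It remains to
see that `φ` is injective on `C / L`.

The brackets `α`, `β`, `γ`, together with `u_{2i-1}` and `v_{2i-1}` read as brackets with the
extra vector `(0, -1)`, generate `S^δ`, and by straightening the monomials in them that form
semistandard tableaux span it; these have distinct leading monomials, so they are independent.
The generators of `L` are exactly the Koszul and Plücker relations needed to straighten, modulo
`L`, a monomial in which one bracket `[b, v_i]` is replaced by the corresponding generator of `C`.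
Hence `C / L` is spanned by standard elements, which `φ` maps to distinct standard monomials.
-/

section StandardMultisets

variable {α γ : Type*}

lemma exists_forall_le_of_isChain [PartialOrder α] {s : Multiset α}
    (hs : IsChain (· ≤ ·) {p | p ∈ s}) (hs0 : s ≠ 0) : ∃ p ∈ s, ∀ q ∈ s, p ≤ q := by
  obtain ⟨p, hp, hmin⟩ := (Multiset.finite_toSet s).exists_minimal
    (Multiset.exists_mem_of_ne_zero hs0)
  exact ⟨p, hp, fun q hq => (hs.total hp hq).elim id (hmin hq)⟩

lemma eq_of_isChain_of_map_eq [PartialOrder α] [PartialOrder γ] {s t : Multiset (α × γ)}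
    (hs : IsChain (· ≤ ·) {p | p ∈ s}) (ht : IsChain (· ≤ ·) {p | p ∈ t})
    (hfst : s.map Prod.fst = t.map Prod.fst) (hsnd : s.map Prod.snd = t.map Prod.snd) :
    s = t := by
  induction hn : s.card generalizing s t with
  | zero =>
    obtain rfl := Multiset.card_eq_zero.1 hn
    exact (Multiset.map_eq_zero.1 hfst.symm).symm
  | succ n ih =>
    have hs0 : s ≠ 0 := by rintro rfl; simp at hn
    have ht0 : t ≠ 0 := by rintro rfl; exact hs0 (Multiset.map_eq_zero.1 hfst)
    obtain ⟨p, hp, hpmin⟩ := exists_forall_le_of_isChain hs hs0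
    obtain ⟨q, hq, hqmin⟩ := exists_forall_le_of_isChain ht ht0
    obtain rfl : p = q := by
      obtain ⟨p₁, hp₁, hfst₁⟩ := Multiset.mem_map.1 (hfst ▸ Multiset.mem_map_of_mem Prod.fst hp)
      obtain ⟨p₂, hp₂, hsnd₂⟩ := Multiset.mem_map.1 (hsnd ▸ Multiset.mem_map_of_mem Prod.snd hp)
      obtain ⟨q₁, hq₁, hfst₁'⟩ := Multiset.mem_map.1 (hfst ▸ Multiset.mem_map_of_mem Prod.fst hq)
      obtain ⟨q₂, hq₂, hsnd₂'⟩ := Multiset.mem_map.1 (hsnd ▸ Multiset.mem_map_of_mem Prod.snd hq)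
      exact Prod.ext (le_antisymm (hfst₁' ▸ (hpmin _ hq₁).1) (hfst₁ ▸ (hqmin _ hp₁).1))
        (le_antisymm (hsnd₂' ▸ (hpmin _ hq₂).2) (hsnd₂ ▸ (hqmin _ hp₂).2))
    obtain ⟨s, rfl⟩ := Multiset.exists_cons_of_mem hp
    obtain ⟨t, rfl⟩ := Multiset.exists_cons_of_mem hq
    simp only [Multiset.map_cons, Multiset.cons_inj_right] at hfst hsnd
    rw [ih (hs.mono fun _ => Multiset.mem_cons_of_mem) (ht.mono fun _ => Multiset.mem_cons_of_mem)
      hfst hsnd (by simpa using hn)]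

variable {I : Type*} [LinearOrder I]

/-- A multiset of pairs (the columns of a two-row tableau) each of which is strictly increasing. -/
def IsIncreasing (s : Multiset (I × I)) : Prop := ∀ p ∈ s, p.1 < p.2

/-- The two-row tableaux that can be made semistandard by permuting columns: the columns form a
chain for the product order. -/
def IsStandard (s : Multiset (I × I)) : Prop := IsIncreasing s ∧ IsChain (· ≤ ·) {p | p ∈ s}

@[simp]
lemma isIncreasing_zero : IsIncreasing (0 : Multiset (I × I)) := by simp [IsIncreasing]

@[simp]
lemma isIncreasing_cons {p : I × I} {s : Multiset (I × I)} :
    IsIncreasing (p ::ₘ s) ↔ p.1 < p.2 ∧ IsIncreasing s := by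
  simp [IsIncreasing]

lemma IsIncreasing.of_le {s t : Multiset (I × I)} (ht : IsIncreasing t) (hst : s ≤ t) :
    IsIncreasing s :=
  fun p hp => ht p (Multiset.mem_of_le hst hp)

lemma IsStandard.of_le {s t : Multiset (I × I)} (ht : IsStandard t) (hst : s ≤ t) :
    IsStandard s :=
  ⟨ht.1.of_le hst, ht.2.mono fun _ hp => Multiset.mem_of_le hst hp⟩

lemma exists_nested_of_not_isStandard {s : Multiset (I × I)} (hs : IsIncreasing s)
    (hs' : ¬ IsStandard s) :
    ∃ a b c d t, s = (a, b) ::ₘ (c, d) ::ₘ t ∧ a < c ∧ c < d ∧ d < b := by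
  obtain ⟨⟨a, b⟩, hp, ⟨c, d⟩, hq, hac, hdb⟩ : ∃ p ∈ s, ∃ q ∈ s, p.1 < q.1 ∧ q.2 < p.2 := by
    by_contra! hnot
    refine hs' ⟨hs, fun p hp q hq _ => ?_⟩
    rcases lt_trichotomy p.1 q.1 with h | h | h
    · exact .inl ⟨h.le, hnot p hp q hq h⟩
    · exact (le_total p.2 q.2).imp (fun h' => ⟨h.le, h'⟩) fun h' => ⟨h.ge, h'⟩
    · exact .inr ⟨h.le, hnot q hq p hp h⟩
  obtain ⟨s, rfl⟩ := Multiset.exists_cons_of_mem hp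
  have hne : (c, d) ≠ (a, b) := fun h => hac.ne' (congrArg Prod.fst h)
  obtain ⟨t, rfl⟩ := Multiset.exists_cons_of_mem ((Multiset.mem_cons.1 hq).resolve_left hne)
  exact ⟨a, b, c, d, t, rfl, hac, hs _ hq, hdb⟩

lemma card_Ico_add_card_Ico [LocallyFiniteOrder I] {a b c : I} (hab : a ≤ b) (hbc : b ≤ c) :
    (Finset.Ico a b).card + (Finset.Ico b c).card = (Finset.Ico a c).card := by
  rw [← Finset.card_union_of_disjoint (Finset.Ico_disjoint_Ico_consecutive a b c),
    Finset.Ico_union_Ico_eq_Ico hab hbc]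

/-- The sum of the squared column lengths, which decreases along straightening steps. -/
def sumSqLength [LocallyFiniteOrder I] (s : Multiset (I × I)) : ℕ :=
  (s.map fun p => (Finset.Ico p.1 p.2).card ^ 2).sum

lemma sumSqLength_lt_of_nested [LocallyFiniteOrder I] {a b c d : I} (hac : a < c) (hcd : c < d)
    (hdb : d < b) (t : Multiset (I × I)) :
    sumSqLength ((a, d) ::ₘ (c, b) ::ₘ t) < sumSqLength ((a, b) ::ₘ (c, d) ::ₘ t) ∧
      sumSqLength ((a, c) ::ₘ (d, b) ::ₘ t) < sumSqLength ((a, b) ::ₘ (c, d) ::ₘ t) := by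
  simp only [sumSqLength, Multiset.map_cons, Multiset.sum_cons,
    ← card_Ico_add_card_Ico (hac.trans hcd).le hdb.le, ← card_Ico_add_card_Ico hac.le hcd.le,
    ← card_Ico_add_card_Ico hcd.le hdb.le]
  have hac' := Finset.card_pos.2 (Finset.nonempty_Ico.2 hac)
  have hdb' := Finset.card_pos.2 (Finset.nonempty_Ico.2 hdb)
  generalize (Finset.Ico a c).card = l₁ at *
  generalize (Finset.Ico c d).card = l₂
  generalize (Finset.Ico d b).card = l₃ at *
  constructor <;> nlinarith [Nat.mul_pos hac' hdb', Nat.zero_le (l₁ * l₂), Nat.zero_le (l₂ * l₃)]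

/-- Straightening, as an induction principle: a property of increasing multisets follows from the
standard case if it is inherited along the Plücker exchange `[ab][cd] = [ad][cb] - [ac][db]`. -/
theorem IsIncreasing.straightening_induction [Finite I] {C : Multiset (I × I) → Prop}
    (standard : ∀ s, IsStandard s → C s)
    (exchange : ∀ a b c d t, a < c → c < d → d < b → C ((a, d) ::ₘ (c, b) ::ₘ t) →
      C ((a, c) ::ₘ (d, b) ::ₘ t) → C ((a, b) ::ₘ (c, d) ::ₘ t))
    {s : Multiset (I × I)} (hs : IsIncreasing s) : C s := by
  have := Fintype.ofFinite I
  let : LocallyFiniteOrder I := Fintype.toLocallyFiniteOrder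
  induction hn : sumSqLength s using Nat.strong_induction_on generalizing s with
  | _ n ih =>
    by_cases hstd : IsStandard s
    · exact standard s hstd
    obtain ⟨a, b, c, d, t, rfl, hac, hcd, hdb⟩ := exists_nested_of_not_isStandard hs hstd
    obtain ⟨hlt₁, hlt₂⟩ := sumSqLength_lt_of_nested hac hcd hdb t
    simp only [isIncreasing_cons] at hs
    refine exchange a b c d t hac hcd hdb (ih _ (hn ▸ hlt₁) ?_ rfl) (ih _ (hn ▸ hlt₂) ?_ rfl)
    · simp only [isIncreasing_cons]
      exact ⟨hac.trans hcd, hcd.trans hdb, hs.2.2⟩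
    · simp only [isIncreasing_cons]
      exact ⟨hac, hdb, hs.2.2⟩

end StandardMultisets

section Brackets

variable {J A B : Type*} [CommRing A] [CommRing B]

/-- The bracket `[i, j]` of two of the vectors `(x j, y j)` together with the extra vector
`(0, -1)`, indexed by `⊥`, chosen so that `[⊥, j] = x j`. -/
def bracket (x y : J → A) (p : WithBot J × WithBot J) : A :=
  WithBot.recBotCoe 0 x p.1 * WithBot.recBotCoe (-1) y p.2 -
    WithBot.recBotCoe (-1) y p.1 * WithBot.recBotCoe 0 x p.2

/-- The product of the brackets of the columns of `s`. -/
def bracketMonomial (x y : J → A) (s : Multiset (WithBot J × WithBot J)) : A :=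
  (s.map (bracket x y)).prod

@[simp]
lemma bracket_bot_coe (x y : J → A) (j : J) : bracket x y (⊥, ↑j) = x j := by
  simp [bracket]

@[simp]
lemma bracket_coe_coe (x y : J → A) (i j : J) :
    bracket x y (↑i, ↑j) = x i * y j - y i * x j := by
  simp [bracket]

lemma bracket_plucker (x y : J → A) (a b c d : WithBot J) :
    bracket x y (a, b) * bracket x y (c, d) =
      bracket x y (a, d) * bracket x y (c, b) - bracket x y (a, c) * bracket x y (d, b) := by
  simp only [bracket]
  ring

lemma map_bracket (f : A →+* B) (x y : J → A) (p : WithBot J × WithBot J) :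
    f (bracket x y p) = bracket (f ∘ x) (f ∘ y) p := by
  have hx (i : WithBot J) : f (WithBot.recBotCoe 0 x i) = WithBot.recBotCoe 0 (f ∘ x) i := by
    cases i <;> simp
  have hy (i : WithBot J) :
      f (WithBot.recBotCoe (-1) y i) = WithBot.recBotCoe (-1) (f ∘ y) i := by
    cases i <;> simp
  simp only [bracket, map_sub, map_mul, hx, hy]

lemma map_bracketMonomial (f : A →+* B) (x y : J → A) (s : Multiset (WithBot J × WithBot J)) :
    f (bracketMonomial x y s) = bracketMonomial (f ∘ x) (f ∘ y) s := by
  simp only [bracketMonomial, map_multiset_prod, Multiset.map_map, Function.comp_def, map_bracket]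

@[simp]
lemma bracketMonomial_cons (x y : J → A) (p : WithBot J × WithBot J)
    (s : Multiset (WithBot J × WithBot J)) :
    bracketMonomial x y (p ::ₘ s) = bracket x y p * bracketMonomial x y s := by
  simp [bracketMonomial]

lemma bracketMonomial_plucker (x y : J → A) (a b c d : WithBot J)
    (t : Multiset (WithBot J × WithBot J)) :
    bracketMonomial x y ((a, b) ::ₘ (c, d) ::ₘ t) =
      bracketMonomial x y ((a, d) ::ₘ (c, b) ::ₘ t) -
        bracketMonomial x y ((a, c) ::ₘ (d, b) ::ₘ t) := by
  simp only [bracketMonomial_cons, ← mul_assoc, bracket_plucker x y a b c d, sub_mul]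

lemma bracketMonomial_mem_span_standard [LinearOrder J] [Finite J] (k : Type*) [CommRing k]
    [Algebra k A] (x y : J → A) {s : Multiset (WithBot J × WithBot J)} (hs : IsIncreasing s) :
    bracketMonomial x y s ∈ Submodule.span k (bracketMonomial x y '' {t | IsStandard t}) := by
  refine hs.straightening_induction (C := fun s => bracketMonomial x y s ∈ _)
    (fun s hs => Submodule.subset_span (Set.mem_image_of_mem _ hs))
    fun a b c d t _ _ _ ih₁ ih₂ => ?_
  rw [bracketMonomial_plucker]
  exact Submodule.sub_mem _ ih₁ ih₂

end Brackets

section MonomialOrder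

variable {σ I k : Type*} {m : MonomialOrder σ}

lemma exists_degree_linearCombination_eq [CommRing k] [NoZeroDivisors k]
    {b : I → MvPolynomial σ k} (hb : ∀ i, b i ≠ 0)
    (hinj : Function.Injective fun i => m.degree (b i)) {c : I →₀ k} (hc : c ≠ 0) :
    Finsupp.linearCombination k b c ≠ 0 ∧
      ∃ i, m.degree (Finsupp.linearCombination k b c) = m.degree (b i) := by
  obtain ⟨i, hi, hmax⟩ := Finset.exists_max_image c.support (fun i => m.toSyn (m.degree (b i)))
    (Finsupp.support_nonempty_iff.2 hc)
  have hcoeff : coeff (m.degree (b i)) (Finsupp.linearCombination k b c) ≠ 0 := by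
    rw [Finsupp.linearCombination_apply, Finsupp.sum, coeff_sum, Finset.sum_eq_single_of_mem i hi]
    · rw [coeff_smul]
      exact mul_ne_zero (Finsupp.mem_support_iff.1 hi) (m.coeff_degree_ne_zero_iff.2 (hb i))
    · intro j hj hji
      have hlt := (hmax j hj).lt_of_ne fun h => hji (hinj (m.toSyn.injective h))
      rw [coeff_smul, m.coeff_eq_zero_of_lt hlt, smul_zero]
  refine ⟨fun h => hcoeff (by rw [h, coeff_zero]), i, m.toSyn.injective (le_antisymm ?_ ?_)⟩
  · rw [Finsupp.linearCombination_apply]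
    exact m.degree_sum_le.trans
      (Finset.sup_le fun j hj => m.degree_smul_le.trans (hmax j hj))
  · exact m.le_degree (mem_support_iff.2 hcoeff)

lemma linearIndependent_of_degree_injective [CommRing k] [NoZeroDivisors k]
    {b : I → MvPolynomial σ k} (hb : ∀ i, b i ≠ 0)
    (hinj : Function.Injective fun i => m.degree (b i)) : LinearIndependent k b :=
  linearIndependent_iff.2 fun _ hc =>
    by_contra fun hc0 => (exists_degree_linearCombination_eq hb hinj hc0).1 hc

lemma exists_degree_eq_of_mem_span_range [CommRing k] [NoZeroDivisors k]
    {b : I → MvPolynomial σ k} (hb : ∀ i, b i ≠ 0)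
    (hinj : Function.Injective fun i => m.degree (b i)) {f : MvPolynomial σ k}
    (hf : f ∈ Submodule.span k (Set.range b)) (hf0 : f ≠ 0) : ∃ i, m.degree f = m.degree (b i) := by
  obtain ⟨c, rfl⟩ := Finsupp.mem_span_range_iff_exists_finsupp.1 hf
  exact (exists_degree_linearCombination_eq hb hinj fun hc => hf0 (by simp [hc])).2

lemma le_span_of_forall_exists_degree_eq [Field k] {V : Submodule k (MvPolynomial σ k)}
    {b : Set (MvPolynomial σ k)} (hbV : b ⊆ V)
    (hV : ∀ f ∈ V, f ≠ 0 → ∃ g ∈ b, g ≠ 0 ∧ m.degree g = m.degree f) :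
    V ≤ Submodule.span k b := by
  intro f hf
  induction hn : m.toSyn (m.degree f) using WellFoundedLT.induction generalizing f with
  | _ n ih =>
    by_cases hf0 : f = 0
    · exact hf0 ▸ zero_mem _
    obtain ⟨g, hgb, hg0, hdeg⟩ := hV f hf hf0
    let c := m.leadingCoeff f / m.leadingCoeff g
    have hcoeff : coeff (m.degree f) (f - c • g) = 0 := by
      rw [coeff_sub, coeff_smul, ← hdeg, smul_eq_mul]
      change coeff _ f - m.leadingCoeff f / m.leadingCoeff g * m.leadingCoeff g = 0
      rw [div_mul_cancel₀ _ (m.leadingCoeff_ne_zero_iff.2 hg0), hdeg]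
      exact sub_self _
    have hle : m.toSyn (m.degree (f - c • g)) ≤ m.toSyn (m.degree f) :=
      m.degree_sub_le.trans (sup_le le_rfl (m.degree_smul_le.trans (by rw [hdeg])))
    have hsub : f - c • g ∈ Submodule.span k b := by
      by_cases h0 : f - c • g = 0
      · exact h0 ▸ zero_mem _
      refine ih _ (hn ▸ hle.lt_of_ne fun h => ?_) (sub_mem hf (V.smul_mem _ (hbV hgb))) rfl
      rw [← m.toSyn.injective h] at hcoeff
      exact m.coeff_degree_ne_zero_iff.2 h0 hcoeff
    simpa using add_mem hsub (Submodule.smul_mem _ c (Submodule.subset_span hgb))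

end MonomialOrder

section LeadingExponents

variable {J : Type*} (k : Type*) [Field k]

/-- The first coordinate `x j` of the `j`-th generic vector. -/
noncomputable def genericX (j : J) : MvPolynomial (J ⊕ₗ J) k := X (Sum.inrₗ j)

/-- The second coordinate `y j` of the `j`-th generic vector. -/
noncomputable def genericY (j : J) : MvPolynomial (J ⊕ₗ J) k := X (Sum.inlₗ j)

@[simp]
lemma genericX_ne_zero (j : J) : genericX k j ≠ 0 := X_ne_zero _

@[simp]
lemma genericY_ne_zero (j : J) : genericY k j ≠ 0 := X_ne_zero _

/-- The exponent of `y i * x j` for the column `(i, j)`, where `⊥` contributes nothing. In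
`J ⊕ₗ J` the left summand indexes the variables `y` and the right one the variables `x`, so that
lexicographically every `y` dominates every `x`. -/
noncomputable def columnExponent (p : WithBot J × WithBot J) : J ⊕ₗ J →₀ ℕ :=
  WithBot.recBotCoe 0 (fun i => Finsupp.single (Sum.inlₗ i) 1) p.1 +
    WithBot.recBotCoe 0 (fun j => Finsupp.single (Sum.inrₗ j) 1) p.2

/-- The sum of the exponents of the columns of `s`. -/
noncomputable def tableauExponent (s : Multiset (WithBot J × WithBot J)) : J ⊕ₗ J →₀ ℕ :=
  (s.map columnExponent).sum

@[simp]
lemma tableauExponent_zero : tableauExponent (0 : Multiset (WithBot J × WithBot J)) = 0 := by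
  simp [tableauExponent]

@[simp]
lemma tableauExponent_cons (p : WithBot J × WithBot J) (s : Multiset (WithBot J × WithBot J)) :
    tableauExponent (p ::ₘ s) = columnExponent p + tableauExponent s := by
  simp [tableauExponent]

lemma multiset_eq_of_count_coe_eq [DecidableEq J] {s t : Multiset (WithBot J)}
    (hcard : s.card = t.card) (hcount : ∀ j : J, s.count ↑j = t.count ↑j) : s = t := by
  wlog hbot : s.count ⊥ ≤ t.count ⊥ generalizing s t
  · exact (this hcard.symm (fun j => (hcount j).symm) (le_of_not_ge hbot)).symm
  refine Multiset.eq_of_le_of_card_le (Multiset.le_iff_count.2 fun i => ?_) hcard.ge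
  induction i with
  | bot => exact hbot
  | coe j => exact (hcount j).le

variable [LinearOrder J]

lemma columnExponent_inlₗ (p : WithBot J × WithBot J) (i : J) :
    columnExponent p (Sum.inlₗ i) = if ↑i = p.1 then 1 else 0 := by
  obtain ⟨a, b⟩ := p
  cases a <;> cases b <;> simp [columnExponent, Finsupp.single_apply, Sum.inlₗ, Sum.inrₗ, eq_comm]

lemma columnExponent_inrₗ (p : WithBot J × WithBot J) (j : J) :
    columnExponent p (Sum.inrₗ j) = if ↑j = p.2 then 1 else 0 := by
  obtain ⟨a, b⟩ := p
  cases a <;> cases b <;> simp [columnExponent, Finsupp.single_apply, Sum.inlₗ, Sum.inrₗ, eq_comm]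

lemma tableauExponent_inlₗ (s : Multiset (WithBot J × WithBot J)) (i : J) :
    tableauExponent s (Sum.inlₗ i) = (s.map Prod.fst).count ↑i := by
  induction s using Multiset.induction with
  | empty => simp
  | cons p s ih =>
    rw [tableauExponent_cons, Finsupp.add_apply, ih, columnExponent_inlₗ, Multiset.map_cons,
      Multiset.count_cons, add_comm]

lemma tableauExponent_inrₗ (s : Multiset (WithBot J × WithBot J)) (j : J) :
    tableauExponent s (Sum.inrₗ j) = (s.map Prod.snd).count ↑j := by
  induction s using Multiset.induction with
  | empty => simp
  | cons p s ih =>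
    rw [tableauExponent_cons, Finsupp.add_apply, ih, columnExponent_inrₗ, Multiset.map_cons,
      Multiset.count_cons, add_comm]

lemma IsIncreasing.bot_notMem_map_snd {s : Multiset (WithBot J × WithBot J)}
    (hs : IsIncreasing s) : ⊥ ∉ s.map Prod.snd := by
  rintro hbot
  obtain ⟨p, hp, hp2⟩ := Multiset.mem_map.1 hbot
  exact not_lt_bot (hp2 ▸ hs p hp)

theorem tableauExponent_injOn_isStandard :
    Set.InjOn tableauExponent {s : Multiset (WithBot J × WithBot J) | IsStandard s} := by
  intro s hs t ht h
  have hsnd : s.map Prod.snd = t.map Prod.snd := by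
    ext i
    induction i with
    | bot => rw [Multiset.count_eq_zero_of_notMem hs.1.bot_notMem_map_snd,
        Multiset.count_eq_zero_of_notMem ht.1.bot_notMem_map_snd]
    | coe j => rw [← tableauExponent_inrₗ, ← tableauExponent_inrₗ, h]
  have hcard : s.card = t.card := by simpa using congrArg Multiset.card hsnd
  have hfst : s.map Prod.fst = t.map Prod.fst :=
    multiset_eq_of_count_coe_eq (by simpa using hcard) fun i => by
      rw [← tableauExponent_inlₗ, ← tableauExponent_inlₗ, h]
  exact eq_of_isChain_of_map_eq hs.2 ht.2 hfst hsnd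

instance finite_sumLex {α γ : Type*} [Finite α] [Finite γ] : Finite (α ⊕ₗ γ) :=
  inferInstanceAs (Finite (α ⊕ γ))

variable [Finite J]

lemma degree_genericX_mul_genericY_lt {i j : J} (hij : i < j) :
    MonomialOrder.lex.toSyn (MonomialOrder.lex.degree (genericX k i * genericY k j)) <
      MonomialOrder.lex.toSyn (MonomialOrder.lex.degree (genericY k i * genericX k j)) := by
  rw [MonomialOrder.degree_mul (genericX_ne_zero k i) (genericY_ne_zero k j),
    MonomialOrder.degree_mul (genericY_ne_zero k i) (genericX_ne_zero k j)]
  simp only [genericX, genericY, MonomialOrder.degree_X]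
  rw [MonomialOrder.lex_lt_iff, Finsupp.Lex.lt_iff]
  refine ⟨Sum.inlₗ i, fun l hl => ?_, ?_⟩
  · have hi : Sum.inlₗ i ≠ l := hl.ne'
    have hj : Sum.inlₗ j ≠ l := (hl.trans (Sum.Lex.inl_lt_inl_iff.2 hij)).ne'
    have hr (c : J) : Sum.inrₗ c ≠ l := (hl.trans (Sum.Lex.inl_lt_inr i c)).ne'
    simp [hi, hj, hr]
  · simp [Sum.inlₗ, Sum.inrₗ, hij.ne']

lemma degree_bracket_generic {p : WithBot J × WithBot J} (hp : p.1 < p.2) :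
    bracket (genericX k) (genericY k) p ≠ 0 ∧
      MonomialOrder.lex.degree (bracket (genericX k) (genericY k) p) = columnExponent p := by
  obtain ⟨i, j⟩ := p
  induction j with
  | bot => exact absurd hp not_lt_bot
  | coe j =>
  induction i with
  | bot => simp [columnExponent, genericX, MonomialOrder.degree_X]
  | coe i =>
    have hlt := degree_genericX_mul_genericY_lt k (WithBot.coe_lt_coe.1 hp)
    rw [← MonomialOrder.degree_neg (f := genericY k i * genericX k j)] at hlt
    have hdeg : MonomialOrder.lex.degree
        (bracket (genericX k) (genericY k) ((i : WithBot J), (j : WithBot J))) =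
          columnExponent ((i : WithBot J), (j : WithBot J)) := by
      rw [bracket_coe_coe, sub_eq_neg_add, MonomialOrder.degree_add_of_lt hlt,
        MonomialOrder.degree_neg,
        MonomialOrder.degree_mul (genericY_ne_zero k i) (genericX_ne_zero k j)]
      simp [columnExponent, genericX, genericY, MonomialOrder.degree_X]
    refine ⟨fun h => ?_, hdeg⟩
    have := congrArg (· (Sum.inlₗ i)) (h ▸ hdeg)
    simp [columnExponent_inlₗ] at this

lemma degree_bracketMonomial_generic {s : Multiset (WithBot J × WithBot J)}
    (hs : IsIncreasing s) :
    bracketMonomial (genericX k) (genericY k) s ≠ 0 ∧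
      MonomialOrder.lex.degree (bracketMonomial (genericX k) (genericY k) s) =
        tableauExponent s := by
  induction s using Multiset.induction with
  | empty => simp [bracketMonomial]
  | cons p s ih =>
    obtain ⟨hp, hs⟩ := isIncreasing_cons.1 hs
    obtain ⟨hs0, hsdeg⟩ := ih hs
    obtain ⟨hp0, hpdeg⟩ := degree_bracket_generic k hp
    rw [bracketMonomial_cons, tableauExponent_cons]
    exact ⟨mul_ne_zero hp0 hs0, by rw [MonomialOrder.degree_mul hp0 hs0, hpdeg, hsdeg]⟩

lemma degree_standard_bracketMonomial_injective :
    Function.Injective fun s : {s : Multiset (WithBot J × WithBot J) // IsStandard s} =>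
      MonomialOrder.lex.degree (bracketMonomial (genericX k) (genericY k) s.1) := by
  intro s t h
  simp only [degree_bracketMonomial_generic k s.2.1,
    degree_bracketMonomial_generic k t.2.1] at h
  exact Subtype.ext (tableauExponent_injOn_isStandard s.2 t.2 h)

theorem linearIndependent_standard_bracketMonomial :
    LinearIndependent k fun s : {s : Multiset (WithBot J × WithBot J) // IsStandard s} =>
      bracketMonomial (genericX k) (genericY k) s.1 :=
  linearIndependent_of_degree_injective
    (fun s => (degree_bracketMonomial_generic k s.2.1).1)
    (degree_standard_bracketMonomial_injective k)

lemma exists_isStandard_degree_eq {f : MvPolynomial (J ⊕ₗ J) k}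
    (hf : f ∈ Submodule.span k
      (bracketMonomial (genericX k) (genericY k) '' {s | IsStandard s})) (hf0 : f ≠ 0) :
    ∃ s, IsStandard s ∧ MonomialOrder.lex.degree f = tableauExponent s := by
  rw [Set.image_eq_range] at hf
  obtain ⟨s, hs⟩ := exists_degree_eq_of_mem_span_range
    (fun s : {s : Multiset (WithBot J × WithBot J) // IsStandard s} =>
      (degree_bracketMonomial_generic k s.2.1).1)
    (degree_standard_bracketMonomial_injective k) hf hf0
  exact ⟨s, s.2, hs.trans (degree_bracketMonomial_generic k s.2.1).2⟩

end LeadingExponents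

section Constants

variable {k A J : Type*} [CommRing k] [CommRing A] [Algebra k A]

/-- A derivation that vanishes on the subalgebra `B`, regarded as a `B`-derivation. -/
def derivationOver (D : Derivation k A A) (B : Subalgebra k A) (hB : ∀ b ∈ B, D b = 0) :
    Derivation B A A :=
  Derivation.mk'
    { toFun := D
      map_add' := map_add D
      map_smul' := fun b f => by
        simp [Subalgebra.smul_def, Derivation.leibniz, hB b b.2] }
    fun f g => D.leibniz f g

lemma transcendental_of_derivation_ne_zero {B : Type*} [CommRing B] [IsDomain A] [CharZero A]
    [Algebra B A] [FaithfulSMul B A] (D : Derivation B A A) {y : A} (hy : D y ≠ 0) :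
    Transcendental B y := by
  have : IsDomain B := (FaithfulSMul.algebraMap_injective B A).isDomain
  have : CharZero B := (algebraMap B A).charZero
  rw [transcendental_iff]
  intro p hp
  induction hn : p.natDegree using Nat.strong_induction_on generalizing p with
  | _ n ih =>
    have hderiv : Polynomial.aeval y p.derivative = 0 := by
      have := D.map_aeval p y
      rw [hp, map_zero, smul_eq_mul] at this
      exact (mul_eq_zero.1 this.symm).resolve_right hy
    have hdeg : p.natDegree = 0 := by
      by_contra hne
      have := ih _ (hn ▸ Polynomial.natDegree_derivative_lt hne) _ hderiv rfl
      exact hne (Polynomial.derivative_eq_zero.1 this)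
    rw [Polynomial.eq_C_of_natDegree_eq_zero hdeg, Polynomial.aeval_C] at hp
    rw [Polynomial.eq_C_of_natDegree_eq_zero hdeg,
      (FaithfulSMul.algebraMap_injective B A) (hp.trans (map_zero _).symm), map_zero]

lemma mem_range_algebraMap_of_derivation_aeval_eq_zero {B : Type*} [CommRing B] [IsDomain A]
    [CharZero A] [Algebra B A] [FaithfulSMul B A] (D : Derivation B A A) {y : A} (hy : D y ≠ 0)
    {p : Polynomial B} (hp : D (Polynomial.aeval y p) = 0) :
    Polynomial.aeval y p ∈ Set.range (algebraMap B A) := by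
  have : IsDomain B := (FaithfulSMul.algebraMap_injective B A).isDomain
  have : CharZero B := (algebraMap B A).charZero
  rw [D.map_aeval, smul_eq_mul] at hp
  have hderiv : p.derivative = 0 :=
    transcendental_iff.1 (transcendental_of_derivation_ne_zero D hy) _
      ((mul_eq_zero.1 hp).resolve_right hy)
  have hdeg := Polynomial.derivative_eq_zero.1 hderiv
  rw [Polynomial.eq_C_of_natDegree_eq_zero hdeg, Polynomial.aeval_C]
  exact Set.mem_range_self _

/-- The derivation `D` sends `y j` to `x j` and `x j` to `0`, i.e. it is a sum of Jordan blocks of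
size two on the vectors `(x j, y j)`. -/
structure IsJordan (D : Derivation k A A) (x y : J → A) : Prop where
  map_x : ∀ j, D (x j) = 0
  map_y : ∀ j, D (y j) = x j

variable {D : Derivation k A A} {x y : J → A}

lemma IsJordan.map_bracket (hD : IsJordan D x y) (p : WithBot J × WithBot J) :
    D (bracket x y p) = 0 := by
  obtain ⟨i, j⟩ := p
  cases i <;> cases j <;> simp [bracket, Derivation.leibniz, hD.map_x, hD.map_y, mul_comm]

lemma IsJordan.map_bracketMonomial (hD : IsJordan D x y) (s : Multiset (WithBot J × WithBot J)) :
    D (bracketMonomial x y s) = 0 := by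
  induction s using Multiset.induction with
  | empty => simp [bracketMonomial]
  | cons p s ih => simp [Derivation.leibniz, ih, hD.map_bracket]

variable [LinearOrder J]

variable (k x y) in
/-- The subalgebra generated by the brackets of increasing columns. -/
def bracketSubalgebra : Subalgebra k A :=
  Algebra.adjoin k (bracket x y '' {p | p.1 < p.2})

lemma bracketSubalgebra_le_span_standard [Finite J] :
    Subalgebra.toSubmodule (bracketSubalgebra k x y) ≤
      Submodule.span k (bracketMonomial x y '' {s | IsStandard s}) := by
  suffices hincr : ∀ f ∈ Submonoid.closure (bracket x y '' {p | p.1 < p.2}),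
      ∃ s, IsIncreasing s ∧ bracketMonomial x y s = f by
    rw [bracketSubalgebra, Algebra.adjoin_eq_span, Submodule.span_le]
    intro f hf
    obtain ⟨s, hs, rfl⟩ := hincr f hf
    exact bracketMonomial_mem_span_standard k x y hs
  intro f hf
  induction hf using Submonoid.closure_induction with
  | mem f hf =>
    obtain ⟨p, hp, rfl⟩ := hf
    exact ⟨{p}, by simpa [IsIncreasing] using hp, by simp [bracketMonomial]⟩
  | one => exact ⟨0, isIncreasing_zero, by simp [bracketMonomial]⟩
  | mul f g _ _ hf hg =>
    obtain ⟨s, hs, rfl⟩ := hf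
    obtain ⟨t, ht, rfl⟩ := hg
    exact ⟨s + t, fun p hp => (Multiset.mem_add.1 hp).elim (hs p) (ht p),
      by simp [bracketMonomial]⟩

lemma x_mem_bracketSubalgebra (j : J) : x j ∈ bracketSubalgebra k x y :=
  Algebra.subset_adjoin ⟨(⊥, ↑j), WithBot.bot_lt_coe j, bracket_bot_coe x y j⟩

lemma IsJordan.eq_zero_of_mem_bracketSubalgebra (hD : IsJordan D x y) {f : A}
    (hf : f ∈ bracketSubalgebra k x y) : D f = 0 := by
  induction hf using Algebra.adjoin_induction with
  | mem f hf =>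
    obtain ⟨p, -, rfl⟩ := hf
    exact hD.map_bracket p
  | algebraMap r => exact D.map_algebraMap r
  | add f g _ _ hf hg => rw [map_add, hf, hg, add_zero]
  | mul f g _ _ hf hg => rw [Derivation.leibniz, hf, hg, smul_zero, smul_zero, add_zero]

lemma x_mul_y_mem_range_aeval {j₀ : J} (hj₀ : ∀ j, j₀ ≤ j) (j : J) :
    x j₀ * y j ∈ (Polynomial.aeval (R := bracketSubalgebra k x y) (y j₀)).range := by
  set Q := (Polynomial.aeval (R := bracketSubalgebra k x y) (y j₀)).range
  have hconst (f : A) (hf : f ∈ bracketSubalgebra k x y) : f ∈ Q := Q.algebraMap_mem ⟨f, hf⟩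
  have hy : y j₀ ∈ Q := ⟨Polynomial.X, Polynomial.aeval_X _⟩
  have hxy (i : J) : x i * y j₀ ∈ Q := mul_mem (hconst _ (x_mem_bracketSubalgebra i)) hy
  rcases (hj₀ j).eq_or_lt with rfl | hlt
  · exact hxy j₀
  · have hbr : bracket x y (↑j₀, ↑j) ∈ bracketSubalgebra k x y :=
      Algebra.subset_adjoin ⟨_, WithBot.coe_lt_coe.2 hlt, rfl⟩
    have : x j₀ * y j = bracket x y (↑j₀, ↑j) + x j * y j₀ := by
      rw [bracket_coe_coe]; ring
    exact this ▸ add_mem (hconst _ hbr) (hxy j)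

lemma exists_x_pow_mul_mem_range_aeval (hgen : Algebra.adjoin k (Set.range x ∪ Set.range y) = ⊤)
    {j₀ : J} (hj₀ : ∀ j, j₀ ≤ j) (f : A) :
    ∃ n : ℕ, x j₀ ^ n * f ∈
      (Polynomial.aeval (R := bracketSubalgebra k x y) (y j₀)).range := by
  set Q := (Polynomial.aeval (R := bracketSubalgebra k x y) (y j₀)).range
  have hx (j : J) : x j ∈ Q := Q.algebraMap_mem ⟨_, x_mem_bracketSubalgebra j⟩
  have hf : f ∈ Algebra.adjoin k (Set.range x ∪ Set.range y) := hgen ▸ Algebra.mem_top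
  induction hf using Algebra.adjoin_induction with
  | mem f hf =>
    obtain ⟨j, rfl⟩ | ⟨j, rfl⟩ := hf
    · exact ⟨0, by simpa using hx j⟩
    · exact ⟨1, by rw [pow_one]; exact x_mul_y_mem_range_aeval hj₀ j⟩
  | algebraMap r => exact ⟨0, by simpa using Q.algebraMap_mem (algebraMap k _ r)⟩
  | add f g _ _ hf hg =>
    obtain ⟨n, hn⟩ := hf
    obtain ⟨l, hl⟩ := hg
    have : x j₀ ^ (n + l) * (f + g) = x j₀ ^ l * (x j₀ ^ n * f) + x j₀ ^ n * (x j₀ ^ l * g) := by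
      ring
    exact ⟨n + l, this ▸ add_mem (mul_mem (pow_mem (hx _) _) hn) (mul_mem (pow_mem (hx _) _) hl)⟩
  | mul f g _ _ hf hg =>
    obtain ⟨n, hn⟩ := hf
    obtain ⟨l, hl⟩ := hg
    have : x j₀ ^ (n + l) * (f * g) = (x j₀ ^ n * f) * (x j₀ ^ l * g) := by ring
    exact ⟨n + l, this ▸ mul_mem hn hl⟩

lemma IsJordan.exists_x_pow_mul_mem_bracketSubalgebra [IsDomain A] [CharZero A]
    (hD : IsJordan D x y) (hgen : Algebra.adjoin k (Set.range x ∪ Set.range y) = ⊤)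
    {j₀ : J} (hj₀ : ∀ j, j₀ ≤ j) (hx : x j₀ ≠ 0) {f : A} (hf : D f = 0) :
    ∃ n : ℕ, x j₀ ^ n * f ∈ bracketSubalgebra k x y := by
  obtain ⟨n, p, hp⟩ := exists_x_pow_mul_mem_range_aeval hgen hj₀ f
  replace hp : Polynomial.aeval (y j₀) p = x j₀ ^ n * f := hp
  let D' := derivationOver D (bracketSubalgebra k x y) fun _ => hD.eq_zero_of_mem_bracketSubalgebra
  have hy : D' (y j₀) ≠ 0 := (hD.map_y j₀).trans_ne hx
  have hconst : D' (Polynomial.aeval (y j₀) p) = 0 := by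
    change D _ = 0
    rw [hp, Derivation.leibniz, Derivation.leibniz_pow, hf, hD.map_x]
    simp
  obtain ⟨g, hg⟩ := mem_range_algebraMap_of_derivation_aeval_eq_zero D' hy hconst
  exact ⟨n, hp ▸ hg ▸ g.2⟩

end Constants

section GenericConstants

variable {k J : Type*} [Field k]

lemma adjoin_generic_eq_top :
    Algebra.adjoin k (Set.range (genericX k) ∪ Set.range (genericY (J := J) k)) = ⊤ := by
  rw [← adjoin_range_X, eq_comm]
  congr 1
  ext f
  constructor
  · rintro ⟨q, rfl⟩
    rcases hq : ofLex q with j | j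
    · exact .inr ⟨j, congrArg X (Equiv.symm_apply_eq toLex |>.1 hq).symm⟩
    · exact .inl ⟨j, congrArg X (Equiv.symm_apply_eq toLex |>.1 hq).symm⟩
  · rintro (⟨j, rfl⟩ | ⟨j, rfl⟩)
    exacts [⟨Sum.inrₗ j, rfl⟩, ⟨Sum.inlₗ j, rfl⟩]

variable [LinearOrder J]

/-- Since `j₀` is minimal, `(⊥, j₀)` is the only increasing column ending in `j₀`. -/
lemma exists_le_tableauExponent_eq {j₀ : J} (hj₀ : ∀ j, j₀ ≤ j)
    {s : Multiset (WithBot J × WithBot J)} (hs : IsIncreasing s) {e : J ⊕ₗ J →₀ ℕ} (n : ℕ)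
    (h : tableauExponent s = n • Finsupp.single (Sum.inrₗ j₀) 1 + e) :
    ∃ t ≤ s, tableauExponent t = e := by
  induction n generalizing s with
  | zero => exact ⟨s, le_rfl, by simpa using h⟩
  | succ n ih =>
    have hmem : (j₀ : WithBot J) ∈ s.map Prod.snd := by
      rw [← Multiset.count_pos, ← tableauExponent_inrₗ, h]
      simp
    obtain ⟨⟨i, j⟩, hp, rfl⟩ := Multiset.mem_map.1 hmem
    obtain rfl : i = ⊥ := by
      by_contra hi
      obtain ⟨i, rfl⟩ := WithBot.ne_bot_iff_exists.1 hi
      exact (WithBot.coe_lt_coe.1 (hs _ hp)).not_ge (hj₀ i)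
    obtain ⟨t, rfl⟩ := Multiset.exists_cons_of_mem hp
    obtain ⟨t', ht', he⟩ := ih (isIncreasing_cons.1 hs).2 (by
      rw [tableauExponent_cons, succ_nsmul', add_assoc] at h
      simpa [columnExponent] using h)
    exact ⟨t', ht'.trans (Multiset.le_cons_self _ _), he⟩

lemma IsJordan.exists_isStandard_degree_eq [Finite J] [CharZero k]
    {D : Derivation k (MvPolynomial (J ⊕ₗ J) k) (MvPolynomial (J ⊕ₗ J) k)}
    (hD : IsJordan D (genericX k) (genericY k)) {f : MvPolynomial (J ⊕ₗ J) k} (hf : D f = 0)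
    (hf0 : f ≠ 0) : ∃ s, IsStandard s ∧ MonomialOrder.lex.degree f = tableauExponent s := by
  rcases isEmpty_or_nonempty J with hJ | hJ
  · have : IsEmpty (J ⊕ₗ J) := inferInstanceAs (IsEmpty (J ⊕ J))
    exact ⟨0, ⟨isIncreasing_zero, by simp [IsChain]⟩, Subsingleton.elim _ _⟩
  obtain ⟨j₀, hj₀⟩ : ∃ j₀ : J, ∀ j, j₀ ≤ j := Finite.exists_min id
  obtain ⟨n, hn⟩ := hD.exists_x_pow_mul_mem_bracketSubalgebra adjoin_generic_eq_top hj₀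
    (genericX_ne_zero k j₀) hf
  have hx : genericX k j₀ ^ n ≠ 0 := pow_ne_zero n (genericX_ne_zero k j₀)
  obtain ⟨s, hs, hdeg⟩ := Stmt9.exists_isStandard_degree_eq k
    (bracketSubalgebra_le_span_standard hn) (mul_ne_zero hx hf0)
  rw [MonomialOrder.degree_mul hx hf0, MonomialOrder.degree_pow, genericX,
    MonomialOrder.degree_X] at hdeg
  obtain ⟨t, hts, ht⟩ := exists_le_tableauExponent_eq hj₀ hs.1 n hdeg.symm
  exact ⟨t, hs.of_le hts, ht.symm⟩

theorem IsJordan.mem_span_standard_generic [Finite J] [CharZero k]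
    {D : Derivation k (MvPolynomial (J ⊕ₗ J) k) (MvPolynomial (J ⊕ₗ J) k)}
    (hD : IsJordan D (genericX k) (genericY k)) {f : MvPolynomial (J ⊕ₗ J) k} (hf : D f = 0) :
    f ∈ Submodule.span k (bracketMonomial (genericX k) (genericY k) '' {s | IsStandard s}) := by
  refine le_span_of_forall_exists_degree_eq (m := MonomialOrder.lex)
    (V := LinearMap.ker D.toLinearMap) ?_ ?_ hf
  · rintro _ ⟨s, -, rfl⟩
    exact hD.map_bracketMonomial s
  · intro g hg hg0
    obtain ⟨s, hs, hdeg⟩ := hD.exists_isStandard_degree_eq hg hg0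
    obtain ⟨hs0, hs'⟩ := degree_bracketMonomial_generic k hs.1
    exact ⟨_, ⟨s, hs, rfl⟩, hs0, hs'.trans hdeg.symm⟩

end GenericConstants

section Coordinates

variable {k J A : Type*} [Field k] [CommRing A] [Algebra k A]
  (e : MvPolynomial (J ⊕ₗ J) k ≃ₐ[k] A)

lemma bracketMonomial_algEquiv_comp (s : Multiset (WithBot J × WithBot J)) :
    bracketMonomial (e ∘ genericX k) (e ∘ genericY k) s =
      e (bracketMonomial (genericX k) (genericY k) s) :=
  (map_bracketMonomial (e : MvPolynomial (J ⊕ₗ J) k →+* A) _ _ s).symm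

variable [LinearOrder J] [Finite J]

theorem linearIndependent_standard_bracketMonomial_comp :
    LinearIndependent k fun s : {s : Multiset (WithBot J × WithBot J) // IsStandard s} =>
      bracketMonomial (e ∘ genericX k) (e ∘ genericY k) s.1 := by
  simp only [bracketMonomial_algEquiv_comp]
  exact (linearIndependent_standard_bracketMonomial k).map' e.toLinearMap
    (LinearMap.ker_eq_bot.2 e.injective)

theorem IsJordan.mem_span_standard [CharZero k] {D : Derivation k A A}
    (hD : IsJordan D (e ∘ genericX k) (e ∘ genericY k)) {f : A} (hf : D f = 0) :
    f ∈ Submodule.span k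
      (bracketMonomial (e ∘ genericX k) (e ∘ genericY k) '' {s | IsStandard s}) := by
  let D' : Derivation k (MvPolynomial (J ⊕ₗ J) k) (MvPolynomial (J ⊕ₗ J) k) :=
    Derivation.mk' (e.symm.toLinearMap ∘ₗ D.toLinearMap ∘ₗ e.toLinearMap)
      fun g h => by simp [Derivation.leibniz]
  have hD' : IsJordan D' (genericX k) (genericY k) :=
    ⟨fun j => e.symm_apply_eq.2 ((hD.map_x j).trans (map_zero e).symm),
      fun j => e.symm_apply_eq.2 (hD.map_y j)⟩
  have hf' : D' (e.symm f) = 0 := by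
    change e.symm (D (e (e.symm f))) = 0
    rw [e.apply_symm_apply, hf, map_zero]
  have := Submodule.mem_map_of_mem (f := e.toLinearMap) (hD'.mem_span_standard_generic hf')
  rw [Submodule.map_span, Set.image_image] at this
  simpa [bracketMonomial_algEquiv_comp] using this

end Coordinates

section CoordinatesOfS

/-- First coordinates of the vectors `v_1 < ⋯ < v_d < u_1 < ⋯ < u_d`. -/
noncomputable def coordX (q : Fin d ⊕ₗ Fin d) : S K d :=
  Sum.elim (fun i => v K d (i, 0)) (fun i => u K d (i, 0)) (ofLex q)

/-- Second coordinates of the vectors `v_1 < ⋯ < v_d < u_1 < ⋯ < u_d`. -/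
noncomputable def coordY (q : Fin d ⊕ₗ Fin d) : S K d :=
  Sum.elim (fun i => v K d (i, 1)) (fun i => u K d (i, 1)) (ofLex q)

lemma coordX_inlₗ (i : Fin d) : coordX K d (Sum.inlₗ i) = v K d (i, 0) := rfl

lemma coordX_inrₗ (i : Fin d) : coordX K d (Sum.inrₗ i) = u K d (i, 0) := rfl

lemma coordY_inlₗ (i : Fin d) : coordY K d (Sum.inlₗ i) = v K d (i, 1) := rfl

lemma coordY_inrₗ (i : Fin d) : coordY K d (Sum.inrₗ i) = u K d (i, 1) := rfl

/-- `S` as the coordinate ring of `2d` generic vectors: the vectors `v_i` and `u_i` form a linear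
change of coordinates from the variables `u`, `v'` of `S`. -/
noncomputable def coordEquiv :
    MvPolynomial ((Fin d ⊕ₗ Fin d) ⊕ₗ (Fin d ⊕ₗ Fin d)) K ≃ₐ[K] S K d :=
  let generic (j : Fin d ⊕ₗ Fin d) := ![genericX K j, genericY K j]
  AlgEquiv.ofAlgHom (aeval fun q => Sum.elim (coordY K d) (coordX K d) (ofLex q))
    (aeval (Sum.elim (fun j => generic (Sum.inrₗ j.1) j.2)
      fun j => generic (Sum.inlₗ j.1) j.2 + generic (Sum.inrₗ j.1) j.2))
    (by
      ext q
      rcases q with ⟨i, c⟩ | ⟨i, c⟩ <;> fin_cases c <;>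
        simp [generic, genericX, genericY, Sum.inlₗ, Sum.inrₗ, coordX, coordY, u, v])
    (by
      ext1 q
      rcases hq : ofLex q with j | j <;> rcases hj : ofLex j with i | i <;>
        obtain rfl : j = toLex _ := hj <;> obtain rfl : q = toLex _ := hq <;>
        simp [generic, genericX, genericY, Sum.inlₗ, Sum.inrₗ, coordX, coordY, u, v])

lemma coordEquiv_comp_genericX : coordEquiv K d ∘ genericX K = coordX K d := by
  ext1 q
  simp [coordEquiv, genericX, Sum.inrₗ]

lemma coordEquiv_comp_genericY : coordEquiv K d ∘ genericY K = coordY K d := by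
  ext1 q
  simp [coordEquiv, genericY, Sum.inlₗ]

variable {K d}

/-- Indices for the extra vector `⊥` and the vectors `v_i`, `u_i`. -/
abbrev Idx (d : ℕ) : Type := WithBot (Fin d ⊕ₗ Fin d)

/-- The index of `v_i`. -/
abbrev vIdx (i : Fin d) : Idx d := ↑(Sum.inlₗ i : Fin d ⊕ₗ Fin d)

/-- The index of `u_i`. -/
abbrev uIdx (i : Fin d) : Idx d := ↑(Sum.inrₗ i : Fin d ⊕ₗ Fin d)

lemma bracket_bot_vIdx (i : Fin d) :
    bracket (coordX K d) (coordY K d) (⊥, vIdx i) = v K d (i, 0) :=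
  bracket_bot_coe ..

lemma bracket_bot_uIdx (i : Fin d) :
    bracket (coordX K d) (coordY K d) (⊥, uIdx i) = u K d (i, 0) :=
  bracket_bot_coe ..

lemma bracket_vIdx_vIdx (i j : Fin d) :
    bracket (coordX K d) (coordY K d) (vIdx i, vIdx j) = β K d i j :=
  bracket_coe_coe ..

lemma bracket_vIdx_uIdx (i j : Fin d) :
    bracket (coordX K d) (coordY K d) (vIdx i, uIdx j) = -γ K d j i := by
  simp only [bracket_coe_coe, coordX_inlₗ, coordX_inrₗ, coordY_inlₗ, coordY_inrₗ, γ]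
  ring

variable {δS : Derivation K (S K d) (S K d)}

lemma isJordan_coord (hu0 : ∀ i : Fin d, δS (u K d (i, 0)) = 0)
    (hu1 : ∀ i : Fin d, δS (u K d (i, 1)) = u K d (i, 0))
    (hv0 : ∀ i : Fin d, δS (v K d (i, 0)) = 0)
    (hv1 : ∀ i : Fin d, δS (v K d (i, 1)) = v K d (i, 0)) :
    IsJordan δS (coordX K d) (coordY K d) where
  map_x q := by rcases hq : ofLex q with i | i <;> simp [coordX, hq, hu0, hv0]
  map_y q := by rcases hq : ofLex q with i | i <;> simp [coordX, coordY, hq, hu1, hv1]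

theorem linearIndependent_standard_coord :
    LinearIndependent K
      fun s : {s : Multiset (Idx d × Idx d) // IsStandard s} =>
        bracketMonomial (coordX K d) (coordY K d) s.1 := by
  simpa only [coordEquiv_comp_genericX, coordEquiv_comp_genericY] using
    linearIndependent_standard_bracketMonomial_comp (coordEquiv K d)

theorem mem_span_standard_coord [CharZero K] (hδ : IsJordan δS (coordX K d) (coordY K d))
    {f : S K d} (hf : f ∈ Sδ K d δS) :
    f ∈ Submodule.span K (bracketMonomial (coordX K d) (coordY K d) '' {s | IsStandard s}) := by
  rw [← coordEquiv_comp_genericX, ← coordEquiv_comp_genericY] at hδ ⊢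
  exact hδ.mem_span_standard (coordEquiv K d) hf

end CoordinatesOfS

section Commutators

variable {K d}

lemma smul_eq_lam_smul (r : R K d) (m : M K d) : r • m = lam K d r • m := rfl

lemma op_smul_eq_rho_smul (r : R K d) (m : M K d) : MulOpposite.op r • m = rho K d r • m := rfl

lemma inl_mul_inr_eq_lam_smul (r : R K d) (m : M K d) :
    (TrivSqZeroExt.inl r * TrivSqZeroExt.inr m : W K d) = TrivSqZeroExt.inr (lam K d r • m) :=
  TrivSqZeroExt.inl_mul_inr r m

lemma inr_mul_inl_eq_rho_smul (r : R K d) (m : M K d) :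
    (TrivSqZeroExt.inr m * TrivSqZeroExt.inl r : W K d) = TrivSqZeroExt.inr (rho K d r • m) :=
  TrivSqZeroExt.inr_mul_inl r m

lemma ε_ι (j : ι d) : ε K d (FreeAlgebra.ι K j) =
    TrivSqZeroExt.inl (X j) + TrivSqZeroExt.inr (a K d j) := by
  simp [ε]

variable (K d) in
/-- The `S`-linear map `M → S` with `a_j ↦ v_j`. -/
noncomputable def φ : M K d →ₗ[S K d] S K d := Fintype.linearCombination (S K d) (v K d)

@[simp]
lemma φ_a (j : ι d) : φ K d (a K d j) = v K d j := by
  simp [φ, a, Fintype.linearCombination_apply_single]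

@[simp]
lemma φ_w (p q : Fin d) : φ K d (w K d p q) = β K d p q := by
  simp only [w, map_sub, map_smul, φ_a, smul_eq_mul, β]
  ring

lemma φ_snd_ε (p : P K d) :
    φ K d (ε K d p).snd = rho K d (ε K d p).fst - lam K d (ε K d p).fst := by
  induction p using FreeAlgebra.induction with
  | grade0 c => simp [TrivSqZeroExt.algebraMap_eq_inl', algebraMap_eq, lam, rho]
  | grade1 j => simp [ε_ι, lam, rho, v]
  | add p q hp hq =>
    simp only [map_add, TrivSqZeroExt.snd_add, TrivSqZeroExt.fst_add, hp, hq]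
    ring
  | mul p q hp hq =>
    simp only [map_mul, TrivSqZeroExt.snd_mul, TrivSqZeroExt.fst_mul, smul_eq_lam_smul,
      op_smul_eq_rho_smul, map_add, map_smul, hp, hq, smul_eq_mul]
    ring

variable (K d) in
/-- The elements `m` of `M` with `(0, m) ∈ ε(P')`. They form an `S`-submodule because multiplying
`p ∈ P'` by `x_j` on the left or on the right multiplies `m` by `u_j` or `v'_j`. -/
noncomputable def commutatorElements : Submodule (S K d) (M K d) where
  carrier := {m | ∃ p ∈ P' K d, ε K d p = TrivSqZeroExt.inr m}
  add_mem' := by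
    rintro m n ⟨p, hp, hpm⟩ ⟨q, hq, hqn⟩
    exact ⟨p + q, (P' K d).add_mem hp hq, by rw [map_add, hpm, hqn, TrivSqZeroExt.inr_add]⟩
  zero_mem' := ⟨0, (P' K d).zero_mem, by simp⟩
  smul_mem' f m hm := by
    induction f using MvPolynomial.induction_on generalizing m with
    | C c =>
      obtain ⟨p, hp, hpm⟩ := hm
      exact ⟨algebraMap K _ c * p, (P' K d).mul_mem_left _ _ hp, by
        simp [hpm, TrivSqZeroExt.algebraMap_eq_inl', inl_mul_inr_eq_lam_smul, lam, algebraMap_eq]⟩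
    | add f g hf hg =>
      obtain ⟨p, hp, hpm⟩ := hf m hm
      obtain ⟨q, hq, hqm⟩ := hg m hm
      exact ⟨p + q, (P' K d).add_mem hp hq, by
        rw [map_add, hpm, hqm, add_smul, TrivSqZeroExt.inr_add]⟩
    | mul_X f j hf =>
      rw [mul_smul]
      obtain ⟨p, hp, hpm⟩ := hm
      refine hf _ ?_
      rcases j with j | j
      · exact ⟨FreeAlgebra.ι K j * p, (P' K d).mul_mem_left _ _ hp, by
          simp [hpm, ε_ι, add_mul, inl_mul_inr_eq_lam_smul, lam]⟩
      · exact ⟨p * FreeAlgebra.ι K j, (P' K d).mul_mem_right _ _ hp, by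
          simp [hpm, ε_ι, mul_add, inr_mul_inl_eq_rho_smul, rho]⟩

lemma commutatorElements_le_ker_φ : commutatorElements K d ≤ LinearMap.ker (φ K d) := by
  rintro m ⟨p, -, hp⟩
  simpa [hp] using φ_snd_ε p

lemma koszul_a_mem_commutatorElements (i j : ι d) :
    v K d j • a K d i - v K d i • a K d j ∈ commutatorElements K d := by
  refine ⟨FreeAlgebra.ι K i * FreeAlgebra.ι K j - FreeAlgebra.ι K j * FreeAlgebra.ι K i,
    TwoSidedIdeal.subset_span ⟨_, _, rfl⟩, ?_⟩
  rw [map_sub, map_mul, map_mul, ε_ι, ε_ι]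
  ext1
  · simp [mul_comm]
  · simp only [TrivSqZeroExt.snd_sub, TrivSqZeroExt.snd_mul, TrivSqZeroExt.fst_add,
      TrivSqZeroExt.snd_add, TrivSqZeroExt.fst_inl, TrivSqZeroExt.fst_inr, TrivSqZeroExt.snd_inl,
      TrivSqZeroExt.snd_inr, smul_eq_lam_smul, op_smul_eq_rho_smul, add_zero, zero_add, lam, rho,
      rename_X, v]
    module

variable (K d) in
lemma span_range_a : Submodule.span (S K d) (Set.range (a K d)) = ⊤ := by
  simpa [a, funext_iff, Set.range] using (Pi.basisFun (S K d) (ι d)).span_eq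

lemma koszul_mem_commutatorElements (m n : M K d) :
    φ K d n • m - φ K d m • n ∈ commutatorElements K d := by
  have hm : m ∈ Submodule.span (S K d) (Set.range (a K d)) := span_range_a K d ▸ trivial
  have hn : n ∈ Submodule.span (S K d) (Set.range (a K d)) := span_range_a K d ▸ trivial
  induction hm, hn using Submodule.span_induction₂ with
  | mem_mem m n hm hn =>
    obtain ⟨⟨i, rfl⟩, j, rfl⟩ := And.intro hm hn
    simpa only [φ_a] using koszul_a_mem_commutatorElements i j
  | zero_left | zero_right => simp
  | add_left m m' n _ _ _ h h' =>
    convert add_mem h h' using 1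
    rw [map_add]
    module
  | add_right m n n' _ _ _ h h' =>
    convert add_mem h h' using 1
    rw [map_add]
    module
  | smul_left r m n _ _ h =>
    convert Submodule.smul_mem _ r h using 1
    rw [map_smul, smul_eq_mul]
    module
  | smul_right r m n _ _ h =>
    convert Submodule.smul_mem _ r h using 1
    rw [map_smul, smul_eq_mul]
    module

lemma w_add_w_mem_commutatorElements (i j : Fin d) :
    w K d i j + w K d j i ∈ commutatorElements K d := by
  convert add_mem (koszul_a_mem_commutatorElements (K := K) (i, 0) (j, 1))
    (koszul_a_mem_commutatorElements (j, 0) (i, 1)) using 1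
  simp only [w]
  module

lemma β_relation_mem_commutatorElements (i j k : Fin d) :
    β K d j k • a K d (i, 0) - β K d i k • a K d (j, 0) + β K d i j • a K d (k, 0) ∈
      commutatorElements K d := by
  have hij := koszul_a_mem_commutatorElements (K := K) (i, 0) (j, 0)
  have hik := koszul_a_mem_commutatorElements (K := K) (i, 0) (k, 0)
  have hjk := koszul_a_mem_commutatorElements (K := K) (j, 0) (k, 0)
  convert add_mem (sub_mem (Submodule.smul_mem _ (v K d (k, 1)) hij)
    (Submodule.smul_mem _ (v K d (j, 1)) hik)) (Submodule.smul_mem _ (v K d (i, 1)) hjk) using 1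
  simp only [β]
  module

lemma γ_w_relation_mem_commutatorElements (i j k l : Fin d) :
    γ K d i j • w K d k l - γ K d i k • w K d j l + γ K d i l • w K d j k ∈
      commutatorElements K d := by
  have h₀₁ := koszul_a_mem_commutatorElements (K := K) (k, 0) (j, 1)
  have h₁₁ := koszul_a_mem_commutatorElements (K := K) (j, 1) (k, 1)
  have h₀₀ := koszul_a_mem_commutatorElements (K := K) (k, 0) (j, 0)
  have h₁₀ := koszul_a_mem_commutatorElements (K := K) (j, 0) (k, 1)
  convert sub_mem
    (Submodule.smul_mem _ (u K d (i, 0)) (add_mem (Submodule.smul_mem _ (v K d (l, 1)) h₀₁)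
      (Submodule.smul_mem _ (v K d (l, 0)) h₁₁)))
    (Submodule.smul_mem _ (u K d (i, 1)) (add_mem (Submodule.smul_mem _ (v K d (l, 1)) h₀₀)
      (Submodule.smul_mem _ (v K d (l, 0)) h₁₀))) using 1
  simp only [γ, w]
  module

lemma γ_a_relation_mem_commutatorElements (i j k : Fin d) :
    u K d (i, 0) • w K d j k - γ K d i k • a K d (j, 0) + γ K d i j • a K d (k, 0) ∈
      commutatorElements K d := by
  have h₀₁ := koszul_a_mem_commutatorElements (K := K) (k, 0) (j, 1)
  have h₀₀ := koszul_a_mem_commutatorElements (K := K) (j, 0) (k, 0)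
  convert add_mem (Submodule.smul_mem _ (u K d (i, 0)) h₀₁)
    (Submodule.smul_mem _ (u K d (i, 1)) h₀₀) using 1
  simp only [γ, w]
  module

lemma genL_subset_commutatorElements : genL K d ⊆ commutatorElements K d := by
  rintro _ (((((((⟨i, rfl⟩ | ⟨i, j, -, rfl⟩) | ⟨i, j, -, rfl⟩) | ⟨i, p, q, -, rfl⟩) |
    ⟨i, j, p, q, -, -, rfl⟩) | ⟨i, j, k, -, -, rfl⟩) | ⟨i, j, k, l, -, -, rfl⟩) | ⟨i, j, k, -, rfl⟩)
  · exact koszul_a_mem_commutatorElements (i, 0) (i, 1)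
  · exact w_add_w_mem_commutatorElements i j
  · exact koszul_a_mem_commutatorElements (i, 0) (j, 0)
  · simpa using koszul_mem_commutatorElements (a K d (i, 0)) (w K d p q)
  · simpa using koszul_mem_commutatorElements (w K d i j) (w K d p q)
  · exact β_relation_mem_commutatorElements i j k
  · exact γ_w_relation_mem_commutatorElements i j k l
  · exact γ_a_relation_mem_commutatorElements i j k

end Commutators

section Modules

variable {K d} (δS : Derivation K (S K d) (S K d))

/-- The module `C` of the theorem. -/
noncomputable abbrev moduleC : Submodule (Sδ K d δS) (M K d) :=
  Submodule.span (Sδ K d δS) (genC K d)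

/-- The module `L` of the theorem. -/
noncomputable abbrev moduleL : Submodule (Sδ K d δS) (M K d) :=
  Submodule.span (Sδ K d δS) (genL K d)

lemma moduleL_le_commutatorElements :
    moduleL δS ≤ (commutatorElements K d).restrictScalars (Sδ K d δS) :=
  Submodule.span_le.2 genL_subset_commutatorElements

variable {δS}

lemma IsJordan.bracket_mem (hδ : IsJordan δS (coordX K d) (coordY K d)) (p : Idx d × Idx d) :
    bracket (coordX K d) (coordY K d) p ∈ Sδ K d δS :=
  hδ.map_bracket p

lemma IsJordan.v_mem (hδ : IsJordan δS (coordX K d) (coordY K d)) (i : Fin d) :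
    v K d (i, 0) ∈ Sδ K d δS :=
  bracket_bot_vIdx (K := K) i ▸ hδ.bracket_mem _

lemma IsJordan.u_mem (hδ : IsJordan δS (coordX K d) (coordY K d)) (i : Fin d) :
    u K d (i, 0) ∈ Sδ K d δS :=
  bracket_bot_uIdx (K := K) i ▸ hδ.bracket_mem _

lemma IsJordan.β_mem (hδ : IsJordan δS (coordX K d) (coordY K d)) (i j : Fin d) :
    β K d i j ∈ Sδ K d δS :=
  bracket_vIdx_vIdx (K := K) i j ▸ hδ.bracket_mem _

lemma IsJordan.γ_mem (hδ : IsJordan δS (coordX K d) (coordY K d)) (i j : Fin d) :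
    γ K d i j ∈ Sδ K d δS :=
  neg_mem_iff.1 (bracket_vIdx_uIdx (K := K) j i ▸ hδ.bracket_mem _)

lemma smul_mem_of_mem_Sδ {N : Submodule (Sδ K d δS) (M K d)} {f : S K d} (hf : f ∈ Sδ K d δS)
    {m : M K d} (hm : m ∈ N) : f • m ∈ N :=
  N.smul_mem ⟨f, hf⟩ hm

lemma genL_subset_moduleC (hδ : IsJordan δS (coordX K d) (coordY K d)) :
    genL K d ⊆ moduleC δS := by
  have ha (i : Fin d) {f : S K d} (hf : f ∈ Sδ K d δS) : f • a K d (i, 0) ∈ moduleC δS :=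
    smul_mem_of_mem_Sδ hf (Submodule.subset_span (.inl ⟨i, rfl⟩))
  have hw (i j : Fin d) : w K d i j ∈ moduleC δS := Submodule.subset_span (.inr ⟨i, j, rfl⟩)
  have hw' (i j : Fin d) {f : S K d} (hf : f ∈ Sδ K d δS) : f • w K d i j ∈ moduleC δS :=
    smul_mem_of_mem_Sδ hf (hw i j)
  have hv := hδ.v_mem
  have hu := hδ.u_mem
  have hβ := hδ.β_mem
  have hγ := hδ.γ_mem
  rintro _ (((((((⟨i, rfl⟩ | ⟨i, j, -, rfl⟩) | ⟨i, j, -, rfl⟩) | ⟨i, p, q, -, rfl⟩) |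
    ⟨i, j, p, q, -, -, rfl⟩) | ⟨i, j, k, -, -, rfl⟩) | ⟨i, j, k, l, -, -, rfl⟩) | ⟨i, j, k, -, rfl⟩)
  · exact hw i i
  · exact add_mem (hw i j) (hw j i)
  · exact sub_mem (ha i (hv j)) (ha j (hv i))
  · exact sub_mem (ha i (hβ p q)) (hw' p q (hv i))
  · exact sub_mem (hw' i j (hβ p q)) (hw' p q (hβ i j))
  · exact add_mem (sub_mem (ha i (hβ j k)) (ha j (hβ i k))) (ha k (hβ i j))
  · exact add_mem (sub_mem (hw' k l (hγ i j)) (hw' j l (hγ i k))) (hw' j k (hγ i l))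
  · exact add_mem (sub_mem (hw' j k (hu i)) (ha j (hγ i k))) (ha k (hγ i j))

end Modules

section Relations

variable {K d} {δS : Derivation K (S K d) (S K d)}

lemma w_self_mem_moduleL (i : Fin d) : w K d i i ∈ moduleL δS :=
  Submodule.subset_span
    (.inl <| .inl <| .inl <| .inl <| .inl <| .inl <| .inl ⟨i, rfl⟩)

lemma w_add_w_mem_moduleL (i j : Fin d) : w K d i j + w K d j i ∈ moduleL δS := by
  wlog hij : i ≤ j generalizing i j
  · rw [add_comm]
    exact this j i (le_of_not_ge hij)
  rcases hij.eq_or_lt with rfl | hij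
  · exact add_mem (w_self_mem_moduleL i) (w_self_mem_moduleL i)
  · exact Submodule.subset_span
      (.inl <| .inl <| .inl <| .inl <| .inl <| .inl <| .inr ⟨i, j, hij, rfl⟩)

lemma koszul_a_a_mem_moduleL (i j : Fin d) :
    v K d (j, 0) • a K d (i, 0) - v K d (i, 0) • a K d (j, 0) ∈ moduleL δS := by
  wlog hij : i ≤ j generalizing i j
  · rw [← neg_sub]
    exact neg_mem (this j i (le_of_not_ge hij))
  rcases hij.eq_or_lt with rfl | hij
  · simp
  · exact Submodule.subset_span
      (.inl <| .inl <| .inl <| .inl <| .inl <| .inr ⟨i, j, hij, rfl⟩)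

lemma koszul_a_w_mem_moduleL (i : Fin d) {p q : Fin d} (hpq : p < q) :
    β K d p q • a K d (i, 0) - v K d (i, 0) • w K d p q ∈ moduleL δS :=
  Submodule.subset_span (.inl <| .inl <| .inl <| .inl <| .inr ⟨i, p, q, hpq, rfl⟩)

lemma koszul_w_w_mem_moduleL {i j p q : Fin d} (hij : i < j) (hpq : p < q) :
    β K d p q • w K d i j - β K d i j • w K d p q ∈ moduleL δS :=
  Submodule.subset_span (.inl <| .inl <| .inl <| .inr ⟨i, j, p, q, hij, hpq, rfl⟩)

lemma plucker_bot_vIdx_mem_moduleL {j k l : Fin d} (hjk : j < k) (hkl : k < l) :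
    v K d (l, 0) • w K d j k - β K d j l • a K d (k, 0) + β K d k l • a K d (j, 0) ∈
      moduleL δS := by
  have hβ : β K d k l • a K d (j, 0) - β K d j l • a K d (k, 0) + β K d j k • a K d (l, 0) ∈
      moduleL δS :=
    Submodule.subset_span (.inl <| .inl <| .inr ⟨j, k, l, hjk, hkl, rfl⟩)
  convert sub_mem hβ (koszul_a_w_mem_moduleL l hjk) using 1
  module

lemma plucker_bot_uIdx_mem_moduleL (l : Fin d) {j k : Fin d} (hjk : j < k) :
    u K d (l, 0) • w K d j k - -γ K d l j • a K d (k, 0) + -γ K d l k • a K d (j, 0) ∈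
      moduleL δS := by
  have hγ : u K d (l, 0) • w K d j k - γ K d l k • a K d (j, 0) + γ K d l j • a K d (k, 0) ∈
      moduleL δS :=
    Submodule.subset_span (.inr ⟨l, j, k, hjk, rfl⟩)
  convert hγ using 1
  module

lemma plucker_vIdx_vIdx_mem_moduleL (hδ : IsJordan δS (coordX K d) (coordY K d))
    {i j k l : Fin d} (hik : i < k) (hjl : j < l) :
    β K d i l • w K d j k - β K d j l • w K d i k + β K d k l • w K d i j ∈ moduleL δS := by
  convert add_mem (koszul_w_w_mem_moduleL hjl hik)
    (smul_mem_of_mem_Sδ (hδ.β_mem k l) (w_add_w_mem_moduleL i j)) using 1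
  simp only [β, w]
  module

lemma plucker_vIdx_uIdx_mem_moduleL (l : Fin d) {i j k : Fin d} (hij : i < j) (hjk : j < k) :
    -γ K d l i • w K d j k - -γ K d l j • w K d i k + -γ K d l k • w K d i j ∈ moduleL δS := by
  have hγ : γ K d l i • w K d j k - γ K d l j • w K d i k + γ K d l k • w K d i j ∈
      moduleL δS :=
    Submodule.subset_span (.inl <| .inr ⟨l, i, j, k, hij, hjk, rfl⟩)
  convert neg_mem hγ using 1
  module

/-- The column `(⊥, v_i)` or `(v_j, v_i)`, according to `b`. -/
def column (b : WithBot (Fin d)) (i : Fin d) : Idx d × Idx d := (b.map Sum.inlₗ, vIdx i)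

lemma column_fst_lt_snd {b : WithBot (Fin d)} {i : Fin d} :
    (column b i).1 < (column b i).2 ↔ b < i := by
  cases b <;> simp [column, Sum.inlₗ, WithBot.coe_lt_coe]

lemma column_inj {b c : WithBot (Fin d)} {i j : Fin d} :
    column b i = column c j ↔ b = c ∧ i = j := by
  have hinj : Function.Injective (Sum.inlₗ : Fin d → Fin d ⊕ₗ Fin d) := Sum.inl_injective
  simp only [column, Prod.mk.injEq, WithBot.coe_inj, hinj.eq_iff,
    (WithBot.map_injective hinj).eq_iff]

lemma exists_eq_map_inlₗ_of_lt {x : Idx d} {i : Fin d} (hx : x < vIdx i) :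
    ∃ b : WithBot (Fin d), b < i ∧ x = b.map Sum.inlₗ := by
  cases x using WithBot.recBotCoe with
  | bot => exact ⟨⊥, WithBot.bot_lt_coe i, rfl⟩
  | coe q =>
    have hqi := WithBot.coe_lt_coe.1 hx
    rcases hq : ofLex q with j | j
    · obtain rfl : q = Sum.inlₗ j := hq
      exact ⟨j, WithBot.coe_lt_coe.2 (Sum.Lex.inl_lt_inl_iff.1 hqi), rfl⟩
    · obtain rfl : q = Sum.inrₗ j := hq
      exact absurd hqi Sum.Lex.not_inr_lt_inl

lemma exists_eq_vIdx_of_lt_of_lt {x y : Idx d} {k : Fin d} (hxy : x < y) (hyk : y < vIdx k) :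
    ∃ (b : WithBot (Fin d)) (j : Fin d), b < j ∧ j < k ∧ x = b.map Sum.inlₗ ∧ y = vIdx j := by
  obtain ⟨c, hck, rfl⟩ := exists_eq_map_inlₗ_of_lt hyk
  cases c with
  | bot => exact absurd hxy not_lt_bot
  | coe j =>
    obtain ⟨b, hbj, rfl⟩ := exists_eq_map_inlₗ_of_lt hxy
    exact ⟨b, j, hbj, WithBot.coe_lt_coe.1 hck, rfl, rfl⟩

variable (K) in
/-- The generators of `C`, indexed so that `φ` maps them to the brackets of the columns
`column b i`. -/
noncomputable def vecBracket (b : WithBot (Fin d)) (i : Fin d) : M K d :=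
  WithBot.recBotCoe (a K d (i, 0)) (fun j => w K d j i) b

lemma φ_vecBracket (b : WithBot (Fin d)) (i : Fin d) :
    φ K d (vecBracket K b i) = bracket (coordX K d) (coordY K d) (column b i) := by
  cases b with
  | bot => exact (φ_a _).trans (bracket_bot_vIdx i).symm
  | coe j => exact (φ_w j i).trans (bracket_vIdx_vIdx j i).symm

theorem koszul_vecBracket_mem_moduleL {b c : WithBot (Fin d)} {i j : Fin d} (hb : b < i)
    (hc : c < j) :
    φ K d (vecBracket K c j) • vecBracket K b i - φ K d (vecBracket K b i) • vecBracket K c j ∈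
      moduleL δS := by
  induction b with
  | bot =>
    induction c with
    | bot => simpa [vecBracket] using koszul_a_a_mem_moduleL i j
    | coe q => simpa [vecBracket] using koszul_a_w_mem_moduleL i (WithBot.coe_lt_coe.1 hc)
  | coe p =>
    have hpi := WithBot.coe_lt_coe.1 hb
    induction c with
    | bot =>
      rw [← neg_sub]
      simpa [vecBracket] using neg_mem (koszul_a_w_mem_moduleL (K := K) (δS := δS) j hpi)
    | coe q => simpa [vecBracket] using koszul_w_w_mem_moduleL hpi (WithBot.coe_lt_coe.1 hc)

theorem plucker_vecBracket_mem_moduleL (hδ : IsJordan δS (coordX K d) (coordY K d))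
    {b : WithBot (Fin d)} {j k : Fin d} {s : Idx d} (hb : b < j) (hjk : j < k)
    (hs : vIdx k < s) :
    bracket (coordX K d) (coordY K d) (b.map Sum.inlₗ, s) • vecBracket K j k -
        bracket (coordX K d) (coordY K d) (vIdx j, s) • vecBracket K b k +
      bracket (coordX K d) (coordY K d) (vIdx k, s) • vecBracket K b j ∈ moduleL δS := by
  obtain ⟨q, rfl⟩ := WithBot.ne_bot_iff_exists.1 (bot_le.trans_lt hs).ne'
  rcases hq : ofLex q with l | l
  · obtain rfl : q = Sum.inlₗ l := hq
    have hkl : k < l := Sum.Lex.inl_lt_inl_iff.1 (WithBot.coe_lt_coe.1 hs)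
    rw [bracket_vIdx_vIdx, bracket_vIdx_vIdx]
    cases b with
    | bot =>
      rw [WithBot.map_bot, bracket_bot_vIdx]
      exact plucker_bot_vIdx_mem_moduleL hjk hkl
    | coe i =>
      rw [WithBot.map_coe, bracket_vIdx_vIdx]
      exact plucker_vIdx_vIdx_mem_moduleL hδ ((WithBot.coe_lt_coe.1 hb).trans hjk) (hjk.trans hkl)
  · obtain rfl : q = Sum.inrₗ l := hq
    rw [bracket_vIdx_uIdx, bracket_vIdx_uIdx]
    cases b with
    | bot =>
      rw [WithBot.map_bot, bracket_bot_uIdx]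
      exact plucker_bot_uIdx_mem_moduleL l hjk
    | coe i =>
      rw [WithBot.map_coe, bracket_vIdx_uIdx]
      exact plucker_vIdx_uIdx_mem_moduleL l (WithBot.coe_lt_coe.1 hb) hjk

end Relations

section Straightening

lemma span_sup_inf_ker_le {k V V' : Type*} [Field k] [AddCommGroup V] [Module k V]
    [AddCommGroup V'] [Module k V'] {f : V →ₗ[k] V'} {L : Submodule k V} {G : Set V}
    (hL : L ≤ LinearMap.ker f) (hG : LinearIndepOn k id (f '' G))
    (hinj : ∀ g ∈ G, ∀ h ∈ G, f g = f h → g - h ∈ L) :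
    (Submodule.span k G ⊔ L) ⊓ LinearMap.ker f ≤ L := by
  rintro m ⟨hm, hfm⟩
  have hmem : L.mkQ m ∈ Submodule.span k (L.mkQ '' G) := by
    rw [← Submodule.map_span, ← sup_bot_eq (Submodule.map _ _), ← Submodule.mkQ_map_self L,
      ← Submodule.map_sup]
    exact Submodule.mem_map_of_mem hm
  have hinj' : Set.InjOn (L.liftQ f hL) (L.mkQ '' G) := by
    rintro _ ⟨g, hg, rfl⟩ _ ⟨h, hh, rfl⟩ heq
    exact (Submodule.Quotient.eq L).2 (hinj g hg h hh heq)
  have hind : LinearIndepOn k (L.liftQ f hL) (L.mkQ '' G) := by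
    rw [linearIndepOn_iff_image hinj', Set.image_image]
    exact hG
  have hdisj : Disjoint (Submodule.span k (L.mkQ '' G)) (LinearMap.ker (L.liftQ f hL)) := by
    simpa only [Subtype.range_coe] using Submodule.range_ker_disjoint (v := Subtype.val) hind
  exact (Submodule.Quotient.mk_eq_zero L).1 (Submodule.disjoint_def.1 hdisj _ hmem hfm)

variable {K d} {δS : Derivation K (S K d) (S K d)}

variable (K d) in
/-- The elements `μ_t • vecBracket b i` for standard multisets `column b i ::ₘ t`. -/
def standardElements : Set (M K d) :=
  {m | ∃ b i t, IsStandard (column b i ::ₘ t) ∧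
    m = bracketMonomial (coordX K d) (coordY K d) t • vecBracket K b i}

variable (δS) in
/-- The `K`-subspace `⟨standard elements⟩ + L` of `M`, which will turn out to contain `C`. -/
noncomputable def standardSpan : Submodule K (M K d) :=
  Submodule.span K (standardElements K d) ⊔ (moduleL δS).restrictScalars K

lemma mem_standardSpan_of_mem_moduleL {m : M K d} (hm : m ∈ moduleL δS) : m ∈ standardSpan δS :=
  Submodule.mem_sup_right hm

lemma IsJordan.bracketMonomial_smul_mem (hδ : IsJordan δS (coordX K d) (coordY K d))
    (t : Multiset (Idx d × Idx d)) {m : M K d} (hm : m ∈ moduleL δS) :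
    bracketMonomial (coordX K d) (coordY K d) t • m ∈ moduleL δS :=
  smul_mem_of_mem_Sδ (hδ.map_bracketMonomial t) hm

lemma φ_bracketMonomial_smul_vecBracket (b : WithBot (Fin d)) (i : Fin d)
    (t : Multiset (Idx d × Idx d)) :
    φ K d (bracketMonomial (coordX K d) (coordY K d) t • vecBracket K b i) =
      bracketMonomial (coordX K d) (coordY K d) (column b i ::ₘ t) := by
  rw [map_smul, φ_vecBracket, bracketMonomial_cons, smul_eq_mul, mul_comm]

lemma IsJordan.exchange_column_mem_moduleL (hδ : IsJordan δS (coordX K d) (coordY K d))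
    {b c : WithBot (Fin d)} {i j : Fin d} (hb : b < i) (hc : c < j)
    (t : Multiset (Idx d × Idx d)) :
    bracketMonomial (coordX K d) (coordY K d) (column c j ::ₘ t) • vecBracket K b i -
        bracketMonomial (coordX K d) (coordY K d) (column b i ::ₘ t) • vecBracket K c j ∈
      moduleL δS := by
  convert hδ.bracketMonomial_smul_mem t (koszul_vecBracket_mem_moduleL hb hc) using 1
  simp only [bracketMonomial_cons, φ_vecBracket]
  module

lemma IsJordan.sub_mem_moduleL_of_cons_eq (hδ : IsJordan δS (coordX K d) (coordY K d))
    {b c : WithBot (Fin d)} {i j : Fin d} {t t' : Multiset (Idx d × Idx d)} (hb : b < i)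
    (hc : c < j) (h : column b i ::ₘ t = column c j ::ₘ t') :
    bracketMonomial (coordX K d) (coordY K d) t • vecBracket K b i -
        bracketMonomial (coordX K d) (coordY K d) t' • vecBracket K c j ∈ moduleL δS := by
  rcases Multiset.cons_eq_cons.1 h with ⟨hcol, rfl⟩ | ⟨-, s, rfl, rfl⟩
  · obtain ⟨rfl, rfl⟩ := column_inj.1 hcol
    simp
  · exact hδ.exchange_column_mem_moduleL hb hc s

lemma IsJordan.plucker_mem_standardSpan (hδ : IsJordan δS (coordX K d) (coordY K d))
    {b : WithBot (Fin d)} {j k : Fin d} {y : Idx d} (hb : b < j) (hjk : j < k)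
    (hy : vIdx k < y) {t : Multiset (Idx d × Idx d)}
    (h₁ : bracketMonomial (coordX K d) (coordY K d) ((vIdx j, y) ::ₘ t) • vecBracket K b k ∈
      standardSpan δS)
    (h₂ : bracketMonomial (coordX K d) (coordY K d) ((vIdx k, y) ::ₘ t) • vecBracket K b j ∈
      standardSpan δS) :
    bracketMonomial (coordX K d) (coordY K d) ((b.map Sum.inlₗ, y) ::ₘ t) • vecBracket K j k ∈
      standardSpan δS := by
  have hL := mem_standardSpan_of_mem_moduleL
    (hδ.bracketMonomial_smul_mem t (plucker_vecBracket_mem_moduleL hδ hb hjk hy))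
  convert add_mem (sub_mem h₁ h₂) hL using 1
  simp only [bracketMonomial_cons]
  module

variable (δS) in
/-- Replacing the bracket of any one column of `s` by the corresponding `vecBracket` turns the
monomial of `s` into an element of `standardSpan δS`. -/
def HasStandardPolarizations (s : Multiset (Idx d × Idx d)) : Prop :=
  ∀ (b : WithBot (Fin d)) (i : Fin d) (t : Multiset (Idx d × Idx d)), b < i →
    s = column b i ::ₘ t →
      bracketMonomial (coordX K d) (coordY K d) t • vecBracket K b i ∈ standardSpan δS

lemma IsStandard.hasStandardPolarizations {s : Multiset (Idx d × Idx d)} (hs : IsStandard s) :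
    HasStandardPolarizations δS s := by
  rintro b i t - rfl
  exact Submodule.mem_sup_left (Submodule.subset_span ⟨b, i, t, hs, rfl⟩)

lemma IsJordan.hasStandardPolarizations_exchange (hδ : IsJordan δS (coordX K d) (coordY K d))
    {x y z o : Idx d} {t : Multiset (Idx d × Idx d)} (hxz : x < z) (hzo : z < o) (hoy : o < y)
    (h₁ : HasStandardPolarizations δS ((x, o) ::ₘ (z, y) ::ₘ t))
    (h₂ : HasStandardPolarizations δS ((x, z) ::ₘ (o, y) ::ₘ t)) :
    HasStandardPolarizations δS ((x, y) ::ₘ (z, o) ::ₘ t) := by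
  have inner {c : WithBot (Fin d)} {k : Fin d} (hcol : (z, o) = column c k) :
      bracketMonomial (coordX K d) (coordY K d) ((x, y) ::ₘ t) • vecBracket K c k ∈
        standardSpan δS := by
    obtain ⟨-, rfl⟩ := Prod.mk.inj hcol
    obtain ⟨b, j, hbj, hjk, rfl, rfl⟩ := exists_eq_vIdx_of_lt_of_lt hxz hzo
    obtain ⟨rfl, -⟩ := (column_inj (b := (j : WithBot (Fin d)))).1 hcol
    exact hδ.plucker_mem_standardSpan hbj hjk hoy
      (h₁ b k _ (hbj.trans (WithBot.coe_lt_coe.2 hjk)) rfl) (h₂ b j _ hbj rfl)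
  intro b i t' hb heq
  rcases Multiset.cons_eq_cons.1 heq with ⟨hcol, rfl⟩ | ⟨-, s, hs, rfl⟩
  · obtain ⟨rfl, rfl⟩ := Prod.mk.inj hcol
    obtain ⟨c, k, hck, -, rfl, rfl⟩ := exists_eq_vIdx_of_lt_of_lt hzo hoy
    have hL := mem_standardSpan_of_mem_moduleL (hδ.exchange_column_mem_moduleL hb hck t)
    exact (Submodule.sub_mem_iff_left _ (inner rfl)).1 hL
  · rcases Multiset.cons_eq_cons.1 hs with ⟨hcol, rfl⟩ | ⟨-, r, rfl, rfl⟩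
    · exact inner hcol
    · have rotate (p q : Idx d × Idx d) :
          p ::ₘ q ::ₘ column b i ::ₘ r = column b i ::ₘ p ::ₘ q ::ₘ r := by
        rw [Multiset.cons_swap q, Multiset.cons_swap p]
      rw [bracketMonomial_plucker, sub_smul]
      exact sub_mem (h₁ b i _ hb (rotate _ _)) (h₂ b i _ hb (rotate _ _))

theorem IsJordan.bracketMonomial_smul_vecBracket_mem
    (hδ : IsJordan δS (coordX K d) (coordY K d)) {b : WithBot (Fin d)} {i : Fin d} (hb : b < i)
    {t : Multiset (Idx d × Idx d)} (ht : IsIncreasing t) :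
    bracketMonomial (coordX K d) (coordY K d) t • vecBracket K b i ∈ standardSpan δS := by
  have hs : IsIncreasing (column b i ::ₘ t) :=
    isIncreasing_cons.2 ⟨column_fst_lt_snd.2 hb, ht⟩
  exact hs.straightening_induction (C := HasStandardPolarizations δS)
    (fun _ => IsStandard.hasStandardPolarizations)
    (fun _ _ _ _ _ => hδ.hasStandardPolarizations_exchange) b i t hb rfl

lemma IsJordan.smul_vecBracket_mem_of_lt [CharZero K]
    (hδ : IsJordan δS (coordX K d) (coordY K d)) {f : S K d} (hf : f ∈ Sδ K d δS)
    {b : WithBot (Fin d)} {i : Fin d} (hb : b < i) :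
    f • vecBracket K b i ∈ standardSpan δS := by
  have hle : Submodule.span K (bracketMonomial (coordX K d) (coordY K d) '' {s | IsStandard s}) ≤
      (standardSpan δS).comap
        ((LinearMap.toSpanSingleton (S K d) (M K d) (vecBracket K b i)).restrictScalars K) := by
    rw [Submodule.span_le]
    rintro _ ⟨t, ht, rfl⟩
    exact hδ.bracketMonomial_smul_vecBracket_mem hb ht.1
  exact hle (mem_span_standard_coord hδ hf)

lemma IsJordan.smul_vecBracket_mem [CharZero K] (hδ : IsJordan δS (coordX K d) (coordY K d))
    {f : S K d} (hf : f ∈ Sδ K d δS) (b : WithBot (Fin d)) (i : Fin d) :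
    f • vecBracket K b i ∈ standardSpan δS := by
  rcases lt_or_ge b i with hb | hb
  · exact hδ.smul_vecBracket_mem_of_lt hf hb
  cases b with
  | bot => exact absurd hb (WithBot.bot_lt_coe i).not_ge
  | coe j =>
    rcases (WithBot.coe_le_coe.1 hb).eq_or_lt with rfl | hij
    · exact mem_standardSpan_of_mem_moduleL (smul_mem_of_mem_Sδ hf (w_self_mem_moduleL i))
    · have hL := mem_standardSpan_of_mem_moduleL
        (smul_mem_of_mem_Sδ hf (w_add_w_mem_moduleL j i))
      rw [smul_add] at hL
      exact (Submodule.add_mem_iff_left _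
        (hδ.smul_vecBracket_mem_of_lt hf (WithBot.coe_lt_coe.2 hij))).1 hL

theorem IsJordan.moduleC_le_standardSpan [CharZero K]
    (hδ : IsJordan δS (coordX K d) (coordY K d)) :
    (moduleC δS).restrictScalars K ≤ standardSpan δS := by
  intro m hm
  rw [Submodule.restrictScalars_mem] at hm
  induction hm using Submodule.closure_induction with
  | zero => exact zero_mem _
  | add m n _ _ hm hn => exact add_mem hm hn
  | smul_mem f m hm =>
    rcases hm with ⟨i, rfl⟩ | ⟨p, q, rfl⟩
    · exact hδ.smul_vecBracket_mem f.2 ⊥ i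
    · exact hδ.smul_vecBracket_mem f.2 p q

lemma linearIndepOn_φ_image_standardElements :
    LinearIndepOn K id (φ K d '' standardElements K d) := by
  refine (linearIndependent_standard_coord (K := K) (d := d)).linearIndepOn_id.mono ?_
  rintro _ ⟨_, ⟨b, i, t, hs, rfl⟩, rfl⟩
  exact ⟨⟨_, hs⟩, (φ_bracketMonomial_smul_vecBracket b i t).symm⟩

lemma IsJordan.sub_mem_moduleL_of_φ_eq (hδ : IsJordan δS (coordX K d) (coordY K d)) {m n : M K d}
    (hm : m ∈ standardElements K d) (hn : n ∈ standardElements K d)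
    (h : φ K d m = φ K d n) : m - n ∈ moduleL δS := by
  obtain ⟨b, i, t, hs, rfl⟩ := hm
  obtain ⟨c, j, t', hs', rfl⟩ := hn
  rw [φ_bracketMonomial_smul_vecBracket, φ_bracketMonomial_smul_vecBracket] at h
  have hcons : column b i ::ₘ t = column c j ::ₘ t' := congrArg Subtype.val
    (linearIndependent_standard_coord.injective (a₁ := ⟨_, hs⟩) (a₂ := ⟨_, hs'⟩) h)
  exact hδ.sub_mem_moduleL_of_cons_eq (column_fst_lt_snd.1 (isIncreasing_cons.1 hs.1).1)
    (column_fst_lt_snd.1 (isIncreasing_cons.1 hs'.1).1) hcons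

theorem IsJordan.mem_moduleL_of_φ_eq_zero [CharZero K]
    (hδ : IsJordan δS (coordX K d) (coordY K d)) {m : M K d} (hm : m ∈ moduleC δS)
    (hφ : φ K d m = 0) : m ∈ moduleL δS := by
  have hL : (moduleL δS).restrictScalars K ≤ LinearMap.ker ((φ K d).restrictScalars K) :=
    fun n hn => commutatorElements_le_ker_φ (moduleL_le_commutatorElements δS hn)
  exact span_sup_inf_ker_le hL linearIndepOn_φ_image_standardElements
    (fun _ hg _ hh => hδ.sub_mem_moduleL_of_φ_eq hg hh) ⟨hδ.moduleC_le_standardSpan hm, hφ⟩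

end Straightening

/-- `L` consists exactly of the elements `m` of `C` such that `(0, m) ∈ ε(P')`. -/
theorem stmt9 [CharZero K] (hd : 1 ≤ d)
    (δS : Derivation K (S K d) (S K d))
    (hSu0 : ∀ i : Fin d, δS (u K d (i, 0)) = 0)
    (hSu1 : ∀ i : Fin d, δS (u K d (i, 1)) = u K d (i, 0))
    (hSv0 : ∀ i : Fin d, δS (v K d (i, 0)) = 0)
    (hSv1 : ∀ i : Fin d, δS (v K d (i, 1)) = v K d (i, 0)) :
    ∀ m : M K d,
      m ∈ Submodule.span ↥(Sδ K d δS) (genL K d) ↔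
        (m ∈ Submodule.span ↥(Sδ K d δS) (genC K d) ∧
          ∃ p ∈ P' K d, ε K d p = TrivSqZeroExt.inr m) := by
  intro m
  have hδ : IsJordan δS (coordX K d) (coordY K d) := isJordan_coord hSu0 hSu1 hSv0 hSv1
  constructor
  · intro hm
    exact ⟨Submodule.span_le.2 (genL_subset_moduleC hδ) hm, moduleL_le_commutatorElements δS hm⟩
  · rintro ⟨hC, hP'⟩
    exact hδ.mem_moduleL_of_φ_eq_zero hC (commutatorElements_le_ker_φ hP')

end Stmt9
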